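/- arXiv:2310.12136 — 2 statements merged into one kernel-verified Lean document; each statement's English description precedes it below -/
import Mathlib

section
/- Let ζ be a primitive aperiodic binary substitution of constant length q ≥ 2 with ζ(0) starting with 0 and x = ζ^∞(0). Then for every integer ℓ ≥ 1 the asymptotic recurrence rate RR_ℓ(x,∞,ε₀) = lim_{n→∞} RR_ℓ(x,n,ε₀) exists and RR_ℓ(x,∞,ε₀) = Σ_{l≥ℓ} l·dens(K_l) > 0. -/
open Filter Topology MeasureTheory

namespace RQA

/-- The standard metric on symbolic sequences over an alphabet `α`:
`ρ(x,y) = 2^{-min{i : x i ≠ y i}}` for `x ≠ y` and `ρ(x,x) = 0`. -/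
noncomputable def seqDist {α : Type*} (x y : ℕ → α) : ℝ :=
  haveI := Classical.propDecidable (x = y)
  if x = y then 0 else (2 : ℝ) ^ (-((sInf {i : ℕ | x i ≠ y i} : ℕ) : ℤ))

/-- The (one-sided) shift on sequences. -/
def shift {α : Type*} (x : ℕ → α) : ℕ → α := fun i => x (i + 1)

/-- The embedded sequence `x^{(m)}`, a sequence over the alphabet `α^m`. -/
def embedSeq {α : Type*} (m : ℕ) (x : ℕ → α) : ℕ → (Fin m → α) :=
  fun j t => x (j + (t : ℕ))

section RQAdefs

variable {X : Type*} (d : X → X → ℝ) (f : X → X) (x : X)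

/-- The entry of the recurrence plot at `(i,j)` equals `1`. -/
def RPone (ε : ℝ) (i j : ℕ) : Prop := d (f^[i] x) (f^[j] x) ≤ ε

/-- `(i, j, l)` is a diagonal line in the recurrence plot `RP(x, n, ε)`. -/
def IsLine (n : ℕ) (ε : ℝ) (i j l : ℕ) : Prop :=
  1 ≤ l ∧ i + l ≤ n ∧ j + l ≤ n ∧ i ≠ j ∧
  (∀ h, h < l → RPone d f x ε (i + h) (j + h)) ∧
  (0 < i → 0 < j → ¬ RPone d f x ε (i - 1) (j - 1)) ∧
  (max i j + l < n → ¬ RPone d f x ε (i + l) (j + l))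

/-- `N_l(x, n, ε)`: the number of diagonal lines of length exactly `l`. -/
noncomputable def Nlines (n : ℕ) (ε : ℝ) (l : ℕ) : ℕ :=
  Set.ncard {p : ℕ × ℕ | IsLine d f x n ε p.1 p.2 l}

/-- `P_l(x, n, ε) = N_l/(n² − n)`. -/
noncomputable def Pline (n : ℕ) (ε : ℝ) (l : ℕ) : ℝ :=
  (Nlines d f x n ε l : ℝ) / ((n : ℝ) ^ 2 - (n : ℝ))

/-- `P≥_ℓ(x, n, ε) = Σ_{l ≥ ℓ} P_l`. -/
noncomputable def PlineGe (n : ℕ) (ε : ℝ) (ℓ : ℕ) : ℝ :=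
  ∑' k : ℕ, Pline d f x n ε (ℓ + k)

/-- The recurrence rate `RR_ℓ(x, n, ε) = Σ_{l ≥ ℓ} l · P_l`. -/
noncomputable def RRate (n : ℕ) (ε : ℝ) (ℓ : ℕ) : ℝ :=
  ∑' k : ℕ, ((ℓ + k : ℕ) : ℝ) * Pline d f x n ε (ℓ + k)

/-- The determinism `DET_ℓ(x, n, ε) = RR_ℓ/RR_1`. -/
noncomputable def DETrm (n : ℕ) (ε : ℝ) (ℓ : ℕ) : ℝ :=
  RRate d f x n ε ℓ / RRate d f x n ε 1

/-- The average line length `L_ℓ(x, n, ε) = RR_ℓ/P≥_ℓ`. -/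
noncomputable def LAvg (n : ℕ) (ε : ℝ) (ℓ : ℕ) : ℝ :=
  RRate d f x n ε ℓ / PlineGe d f x n ε ℓ

/-- The entropy of line lengths
`ENT_ℓ(x, n, ε) = log P≥_ℓ − (1/P≥_ℓ)·Σ_{l≥ℓ} P_l · log P_l` (with `0·log 0 = 0`). -/
noncomputable def ENTln (n : ℕ) (ε : ℝ) (ℓ : ℕ) : ℝ :=
  Real.log (PlineGe d f x n ε ℓ) -
    (PlineGe d f x n ε ℓ)⁻¹ *
      ∑' k : ℕ, Pline d f x n ε (ℓ + k) * Real.log (Pline d f x n ε (ℓ + k))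

/-- The correlation sum
`C_ℓ(x, n, ε) = n^{-2}·#{(i,j) ∈ [0,n)² : d_ℓ(f^i x, f^j x) ≤ ε}`,
where `d_ℓ` is the Bowen metric. -/
noncomputable def corrSum (ℓ n : ℕ) (ε : ℝ) : ℝ :=
  (Set.ncard {p : ℕ × ℕ | p.1 < n ∧ p.2 < n ∧
      ∀ k, k < ℓ → d (f^[p.1 + k] x) (f^[p.2 + k] x) ≤ ε} : ℝ) / (n : ℝ) ^ 2

end RQAdefs

/-- The extension of a substitution to a morphism of the free monoid of finite words. -/
def substWord (ζ : Bool → List Bool) : List Bool → List Bool :=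
  fun w => w.foldr (fun a r => ζ a ++ r) []

/-- `ζ` is a (binary) substitution of constant length `q ≥ 2`. -/
def IsConstLenSubst (ζ : Bool → List Bool) (q : ℕ) : Prop :=
  2 ≤ q ∧ ∀ a : Bool, (ζ a).length = q

/-- The language `L_ζ`: subwords of the words `ζ^k(a)`, `a ∈ A`, `k ≥ 1`. -/
def substLang (ζ : Bool → List Bool) : Set (List Bool) :=
  {w | ∃ a : Bool, ∃ k : ℕ, 1 ≤ k ∧ w <:+: (substWord ζ)^[k] [a]}

/-- The substitution subshift `X_ζ`. -/
def SubstShift (ζ : Bool → List Bool) : Set (ℕ → Bool) :=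
  {y | ∀ n : ℕ, (List.ofFn fun t : Fin n => y (t : ℕ)) ∈ substLang ζ}

/-- `ζ` is primitive. -/
def IsPrimitive (ζ : Bool → List Bool) : Prop :=
  ∃ k : ℕ, 1 ≤ k ∧ ∀ a b : Bool, b ∈ (substWord ζ)^[k] [a]

/-- `ζ` is aperiodic: `X_ζ` contains a non-periodic sequence. -/
def IsAperiodic (ζ : Bool → List Bool) : Prop :=
  ∃ y ∈ SubstShift ζ, ∀ p : ℕ, 1 ≤ p → ∃ i : ℕ, y (i + p) ≠ y i

/-- The action of a constant length-`q` substitution on infinite sequences. -/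
def substSeq (ζ : Bool → List Bool) (q : ℕ) (x : ℕ → Bool) : ℕ → Bool :=
  fun i => (ζ (x (i / q))).getD (i % q) false

/-- `(i, j, l)` is a line in the infinite symbolic recurrence plot `RP(x, ∞, ε₀)`. -/
def IsInfLine (x : ℕ → Bool) (i j l : ℕ) : Prop :=
  1 ≤ l ∧ i ≠ j ∧ (∀ h, h < l → x (i + h) = x (j + h)) ∧
  (0 < i → 0 < j → x (i - 1) ≠ x (j - 1)) ∧ x (i + l) ≠ x (j + l)

/-- `K_l`: the set of starting points `(i,j)`, `i,j ≥ 1`, of inner lines of length `l`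
in the infinite symbolic recurrence plot. -/
def Kset (x : ℕ → Bool) (l : ℕ) : Set (ℕ × ℕ) :=
  {p | 1 ≤ p.1 ∧ 1 ≤ p.2 ∧ IsInfLine x p.1 p.2 l}

/-- `#(M ∩ [0,n)²)/n²`. -/
noncomputable def densCount (M : Set (ℕ × ℕ)) (n : ℕ) : ℝ :=
  (Set.ncard (M ∩ {p : ℕ × ℕ | p.1 < n ∧ p.2 < n}) : ℝ) / (n : ℝ) ^ 2

/-- `M ⊆ ℕ²` has asymptotic density `a`. -/
def HasDens (M : Set (ℕ × ℕ)) (a : ℝ) : Prop :=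
  Tendsto (densCount M) atTop (𝓝 a)

/-- `δ_l(n) = #(K_l ∩ [1,n)²)/(n² − n)`. -/
noncomputable def deltaK (x : ℕ → Bool) (l n : ℕ) : ℝ :=
  (Set.ncard (Kset x l ∩ {p : ℕ × ℕ | p.1 < n ∧ p.2 < n}) : ℝ) / ((n : ℝ) ^ 2 - (n : ℝ))

/-- `M` is a minimal subset of the subshift `Y`. -/
def IsMinimalSubset (Y M : Set (ℕ → Bool)) : Prop :=
  M ⊆ Y ∧ M.Nonempty ∧ IsClosed M ∧ (∀ z ∈ M, shift z ∈ M) ∧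
  ∀ M' : Set (ℕ → Bool), M' ⊆ M → M'.Nonempty → IsClosed M' →
    (∀ z ∈ M', shift z ∈ M') → M' = M

end RQA

open RQA

namespace RQAProof
open Classical

theorem shift_iter {α : Type*} (x : ℕ → α) (i h : ℕ) : (shift^[i] x) h = x (i + h) := by
  induction i generalizing x with
  | zero => simp
  | succ i ih =>
    rw [Function.iterate_succ_apply, ih]
    simp only [shift]
    congr 1
    omega

theorem seqDist_le_half (y z : ℕ → Bool) : seqDist y z ≤ 1 / 2 ↔ y 0 = z 0 := by
  unfold seqDist
  by_cases h : y = z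
  · simp [h]
  · rw [if_neg h]
    have hne : {i : ℕ | y i ≠ z i}.Nonempty := by
      by_contra hc
      apply h
      funext i
      by_contra hi
      exact hc ⟨i, hi⟩
    constructor
    · intro h1
      by_contra h0
      have : sInf {i : ℕ | y i ≠ z i} = 0 := Nat.sInf_eq_zero.2 (Or.inl h0)
      rw [this] at h1
      norm_num at h1
    · intro h0
      have h1 : 1 ≤ sInf {i : ℕ | y i ≠ z i} := by
        rcases Nat.eq_zero_or_pos (sInf {i : ℕ | y i ≠ z i}) with h2 | h2
        · have := Nat.sInf_mem hne
          rw [h2] at this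
          exact absurd h0 this
        · exact h2
      calc (2 : ℝ) ^ (-((sInf {i : ℕ | y i ≠ z i} : ℕ) : ℤ)) ≤ (2 : ℝ) ^ (-1 : ℤ) := by
            apply zpow_le_zpow_right₀ (by norm_num)
            omega
        _ = 1 / 2 := by norm_num

theorem RPone_iff (x : ℕ → Bool) (i j : ℕ) :
    RPone seqDist shift x (1 / 2 : ℝ) i j ↔ x i = x j := by
  unfold RPone
  rw [seqDist_le_half, shift_iter, shift_iter]
  simp

def eqw (x : ℕ → Bool) (m i j : ℕ) : Prop := ∀ h, h < m → x (i + h) = x (j + h)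

theorem eqw_succ (x : ℕ → Bool) (m i j : ℕ) :
    eqw x (m + 1) i j ↔ eqw x m i j ∧ x (i + m) = x (j + m) := by
  constructor
  · intro h
    exact ⟨fun k hk => h k (by omega), h m (by omega)⟩
  · rintro ⟨h1, h2⟩ k hk
    rcases Nat.lt_succ_iff_lt_or_eq.1 hk with h | h
    · exact h1 k h
    · rw [h]; exact h2

theorem eqw_succ' (x : ℕ → Bool) (m i j : ℕ) :
    eqw x (m + 1) i j ↔ eqw x m (i + 1) (j + 1) ∧ x i = x j := by
  constructor
  · intro h
    refine ⟨fun k hk => ?_, by simpa using h 0 (by omega)⟩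
    have := h (k + 1) (by omega)
    rwa [show i + 1 + k = i + (k + 1) by omega, show j + 1 + k = j + (k + 1) by omega]
  · rintro ⟨h1, h2⟩ k hk
    rcases k with _ | k
    · simpa using h2
    · have := h1 k (by omega)
      rwa [show i + 1 + k = i + (k + 1) by omega, show j + 1 + k = j + (k + 1) by omega] at this

noncomputable def Cset (x : ℕ → Bool) (n m : ℕ) : Finset (ℕ × ℕ) :=
  (Finset.range n ×ˢ Finset.range n).filter
    (fun p => p.1 + m ≤ n ∧ p.2 + m ≤ n ∧ p.1 ≠ p.2 ∧ eqw x m p.1 p.2)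

noncomputable def Sset (x : ℕ → Bool) (n m : ℕ) : Finset (ℕ × ℕ) :=
  (Cset x n m).filter (fun p => 0 < p.1 → 0 < p.2 → x (p.1 - 1) ≠ x (p.2 - 1))

theorem mem_Cset (x : ℕ → Bool) (n m : ℕ) (hm : 1 ≤ m) (i j : ℕ) :
    (i, j) ∈ Cset x n m ↔ i + m ≤ n ∧ j + m ≤ n ∧ i ≠ j ∧ eqw x m i j := by
  unfold Cset
  simp only [Finset.mem_filter, Finset.mem_product, Finset.mem_range]
  constructor
  · exact fun h => h.2
  · intro h
    exact ⟨⟨by omega, by omega⟩, h⟩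

theorem Cset_empty (x : ℕ → Bool) (n m : ℕ) (h : n < m) : Cset x n m = ∅ := by
  ext ⟨i, j⟩
  rw [mem_Cset _ _ _ (by omega)]
  simp only [Finset.notMem_empty, iff_false]
  omega

theorem card_Sset (x : ℕ → Bool) (n m : ℕ) (hm : 1 ≤ m) :
    (Sset x n m).card + (Cset x n (m + 1)).card = (Cset x n m).card := by
  unfold Sset
  rw [← Finset.card_filter_add_card_filter_not (s := Cset x n m)
    (fun p => 0 < p.1 → 0 < p.2 → x (p.1 - 1) ≠ x (p.2 - 1))]
  congr 1
  apply Finset.card_bij (fun p _ => (p.1 + 1, p.2 + 1))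
  · rintro ⟨i, j⟩ h
    rw [mem_Cset _ _ _ (by omega)] at h
    rw [Finset.mem_filter, mem_Cset _ _ _ hm]
    obtain ⟨h1, h2, h3, h4⟩ := h
    rw [eqw_succ'] at h4
    refine ⟨⟨by omega, by omega, by omega, h4.1⟩, ?_⟩
    simp [h4.2]
  · rintro ⟨i, j⟩ _ ⟨i', j'⟩ _ h
    simpa using h
  · rintro ⟨i, j⟩ h
    rw [Finset.mem_filter, mem_Cset _ _ _ hm] at h
    obtain ⟨⟨h1, h2, h3, h4⟩, h5⟩ := h
    push Not at h5
    obtain ⟨h6, h7, h8⟩ := h5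
    simp only at h6 h7 h8
    obtain ⟨i, rfl⟩ : ∃ i', i = i' + 1 := ⟨i - 1, by omega⟩
    obtain ⟨j, rfl⟩ : ∃ j', j = j' + 1 := ⟨j - 1, by omega⟩
    refine ⟨(i, j), ?_, rfl⟩
    rw [mem_Cset _ _ _ (by omega), eqw_succ']
    exact ⟨by omega, by omega, by omega, h4, by simpa using h8⟩

theorem lines_eq (x : ℕ → Bool) (n l : ℕ) (hl : 1 ≤ l) :
    {p : ℕ × ℕ | IsLine seqDist shift x n (1 / 2 : ℝ) p.1 p.2 l} =
      ((Sset x n l \ Sset x n (l + 1) : Finset (ℕ × ℕ)) : Set (ℕ × ℕ)) := by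
  ext ⟨i, j⟩
  simp only [Set.mem_ofPred_eq, IsLine, RPone_iff, Sset, Finset.coe_sdiff, Finset.coe_filter,
    Set.mem_sdiff, mem_Cset x n l hl, mem_Cset x n (l + 1) (by omega), eqw_succ]
  constructor
  · rintro ⟨-, h1, h2, h3, h4, h5, h6⟩
    refine ⟨⟨⟨h1, h2, h3, h4⟩, h5⟩, ?_⟩
    rintro ⟨⟨h7, h8, h9, h10, h11⟩, h12⟩
    exact h6 (by omega) h11
  · rintro ⟨⟨⟨h1, h2, h3, h4⟩, h5⟩, h6⟩
    refine ⟨hl, h1, h2, h3, h4, h5, fun h7 h8 => h6 ⟨⟨by omega, by omega, h3, h4, h8⟩, h5⟩⟩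

theorem Nlines_eq (x : ℕ → Bool) (n l : ℕ) (hl : 1 ≤ l) :
    (Nlines seqDist shift x n (1 / 2 : ℝ) l : ℝ) =
      (Cset x n l).card - 2 * (Cset x n (l + 1)).card + (Cset x n (l + 2)).card := by
  unfold Nlines
  rw [lines_eq x n l hl, Set.ncard_coe_finset]
  have hsub : Sset x n (l + 1) ⊆ Sset x n l := by
    rintro ⟨i, j⟩ h
    unfold Sset at *
    rw [Finset.mem_filter, mem_Cset _ _ _ (by omega), eqw_succ] at h
    rw [Finset.mem_filter, mem_Cset _ _ _ hl]
    obtain ⟨⟨h1, h2, h3, h4, h5⟩, h6⟩ := h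
    exact ⟨⟨by omega, by omega, h3, h4⟩, h6⟩
  rw [Finset.card_sdiff_of_subset hsub, Nat.cast_sub (Finset.card_le_card hsub)]
  have h1 := card_Sset x n l hl
  have h2 := card_Sset x n (l + 1) (by omega)
  rw [show l + 1 + 1 = l + 2 by omega] at h2
  rw [← @Nat.cast_inj ℝ] at h1 h2
  push_cast at h1 h2
  linarith

theorem telescope (f : ℕ → ℝ) (ℓ M : ℕ) :
    ∑ k ∈ Finset.range M, ((ℓ + k : ℕ) : ℝ) * (f (ℓ + k) - 2 * f (ℓ + k + 1) + f (ℓ + k + 2)) =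
      ((ℓ : ℝ) * f ℓ - ((ℓ : ℝ) - 1) * f (ℓ + 1)) -
      (((ℓ + M : ℕ) : ℝ) * f (ℓ + M) - (((ℓ + M : ℕ) : ℝ) - 1) * f (ℓ + M + 1)) := by
  induction M with
  | zero => simp
  | succ M ih =>
    rw [Finset.sum_range_succ, ih, show ℓ + (M + 1) = ℓ + M + 1 by omega,
      show ℓ + M + 1 + 1 = ℓ + M + 2 by omega]
    push_cast
    ring

theorem RRate_eq (x : ℕ → Bool) (n ℓ : ℕ) (hℓ : 1 ≤ ℓ) :
    RRate seqDist shift x n (1 / 2 : ℝ) ℓ =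
      ((ℓ : ℝ) * (Cset x n ℓ).card - ((ℓ : ℝ) - 1) * (Cset x n (ℓ + 1)).card) /
        ((n : ℝ) ^ 2 - n) := by
  have hP : ∀ k, Pline seqDist shift x n (1 / 2 : ℝ) (ℓ + k) =
      ((Cset x n (ℓ + k)).card - 2 * (Cset x n (ℓ + k + 1)).card + (Cset x n (ℓ + k + 2)).card) /
        ((n : ℝ) ^ 2 - n) := by
    intro k
    unfold Pline
    rw [Nlines_eq x n (ℓ + k) (by omega)]
  unfold RRate
  rw [tsum_eq_sum (s := Finset.range (n + 1))]
  · simp only [hP]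
    have := telescope (fun m => ((Cset x n m).card : ℝ)) ℓ (n + 1)
    simp only [mul_div_assoc', ← Finset.sum_div]
    rw [this, Cset_empty x n (ℓ + (n + 1)) (by omega), Cset_empty x n (ℓ + (n + 1) + 1) (by omega)]
    simp
  · intro k hk
    rw [Finset.mem_range] at hk
    rw [hP, Cset_empty x n (ℓ + k) (by omega), Cset_empty x n (ℓ + k + 1) (by omega),
      Cset_empty x n (ℓ + k + 2) (by omega)]
    simp

/-- boundary set -/
noncomputable def Bset (n l : ℕ) : Finset (ℕ × ℕ) :=
  ((insert 0 (Finset.Ico (n - l) n)) ×ˢ Finset.range n) ∪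
    (Finset.range n ×ˢ (insert 0 (Finset.Ico (n - l) n)))

theorem card_Bset (n l : ℕ) : (Bset n l).card ≤ 2 * (l + 1) * n := by
  have h : (insert 0 (Finset.Ico (n - l) n)).card ≤ l + 1 := by
    refine (Finset.card_insert_le _ _).trans ?_
    simp only [Nat.card_Ico]
    omega
  refine (Finset.card_union_le _ _).trans ?_
  rw [Finset.card_product, Finset.card_product, Finset.card_range]
  nlinarith

theorem Kset_close (x : ℕ → Bool) (n l : ℕ) (hl : 1 ≤ l) :
    |(Set.ncard (Kset x l ∩ {p : ℕ × ℕ | p.1 < n ∧ p.2 < n}) : ℝ) -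
      Nlines seqDist shift x n (1 / 2 : ℝ) l| ≤ 2 * (l + 1) * n := by
  set A := (Sset x n l \ Sset x n (l + 1) : Finset (ℕ × ℕ)) with hA
  have hN : Nlines seqDist shift x n (1 / 2 : ℝ) l = A.card := by
    unfold Nlines
    rw [lines_eq x n l hl, Set.ncard_coe_finset]
  have hfin : (Kset x l ∩ {p : ℕ × ℕ | p.1 < n ∧ p.2 < n}).Finite := by
    apply Set.Finite.subset (Finset.finite_toSet (Finset.range n ×ˢ Finset.range n))
    rintro ⟨i, j⟩ ⟨_, h⟩
    simpa using h
  set K := hfin.toFinset with hK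
  have hKc : Set.ncard (Kset x l ∩ {p : ℕ × ℕ | p.1 < n ∧ p.2 < n}) = K.card :=
    Set.ncard_eq_toFinset_card _ hfin
  have hmA : ∀ i j, (i, j) ∈ A ↔ IsLine seqDist shift x n (1 / 2 : ℝ) i j l := by
    intro i j
    have := Set.ext_iff.1 (lines_eq x n l hl) (i, j)
    rw [hA, ← Finset.mem_coe, ← this]
    rfl
  have hmK : ∀ i j, (i, j) ∈ K ↔ (1 ≤ i ∧ 1 ≤ j ∧ IsInfLine x i j l) ∧ i < n ∧ j < n := by
    intro i j
    rw [hK, Set.Finite.mem_toFinset]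
    rfl
  have hmB : ∀ i j, (i, j) ∈ Bset n l ↔
      ((i = 0 ∨ n - l ≤ i ∧ i < n) ∧ j < n) ∨ (i < n ∧ (j = 0 ∨ n - l ≤ j ∧ j < n)) := by
    intro i j
    simp [Bset]
  have h1 : A ⊆ K ∪ Bset n l := by
    rintro ⟨i, j⟩ h
    rw [Finset.mem_union]
    by_cases hB : (i, j) ∈ Bset n l
    · exact Or.inr hB
    left
    rw [hmB] at hB
    rw [hmA] at h
    rw [hmK]
    simp only [IsLine, RPone_iff] at h
    obtain ⟨h1, h2, h3, h4, h5, h6, h7⟩ := h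
    exact ⟨⟨by omega, by omega, h1, h4, h5, h6, h7 (by omega)⟩, by omega, by omega⟩
  have h2 : K ⊆ A ∪ Bset n l := by
    rintro ⟨i, j⟩ h
    rw [Finset.mem_union]
    by_cases hB : (i, j) ∈ Bset n l
    · exact Or.inr hB
    left
    rw [hmB] at hB
    rw [hmK] at h
    rw [hmA]
    simp only [IsLine, RPone_iff]
    obtain ⟨⟨h1, h2, h3, h4, h5, h6, h7⟩, h8, h9⟩ := h
    exact ⟨hl, by omega, by omega, h4, h5, h6, fun _ => h7⟩
  have hB := card_Bset n l
  have c1 := (Finset.card_le_card h1).trans (Finset.card_union_le _ _)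
  have c2 := (Finset.card_le_card h2).trans (Finset.card_union_le _ _)
  rw [hN, hKc, abs_le]
  have c1' : (A.card : ℝ) ≤ K.card + 2 * (l + 1) * n := by exact_mod_cast c1.trans (by omega)
  have c2' : (K.card : ℝ) ≤ A.card + 2 * (l + 1) * n := by exact_mod_cast c2.trans (by omega)
  constructor <;> linarith

/-- all pairs with the same word -/
noncomputable def Dset (x : ℕ → Bool) (n m : ℕ) : Finset (ℕ × ℕ) :=
  (Finset.range n ×ˢ Finset.range n).filter (fun p => eqw x m p.1 p.2)

theorem Dset_close (x : ℕ → Bool) (n m : ℕ) :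
    |((Dset x n m).card : ℝ) - (Cset x n m).card| ≤ (2 * m + 3) * n := by
  have h1 : Cset x n m ⊆ Dset x n m := by
    intro p h
    unfold Cset at h
    unfold Dset
    rw [Finset.mem_filter] at h ⊢
    exact ⟨h.1, h.2.2.2.2⟩
  have h2 : Dset x n m ⊆ Cset x n m ∪ Bset n m ∪ (Finset.range n).image (fun i => (i, i)) := by
    rintro ⟨i, j⟩ h
    simp only [Dset, Finset.mem_filter, Finset.mem_product, Finset.mem_range] at h
    simp only [Finset.mem_union, Cset, Bset, Finset.mem_filter, Finset.mem_product,
      Finset.mem_range, Finset.mem_insert, Finset.mem_Ico, Finset.mem_image, Prod.mk.injEq]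
    obtain ⟨⟨h1, h2⟩, h3⟩ := h
    by_cases hij : i = j
    · right
      exact ⟨i, h1, rfl, hij⟩
    · left
      by_cases hi : i + m ≤ n
      · by_cases hj : j + m ≤ n
        · left
          exact ⟨⟨h1, h2⟩, hi, hj, hij, h3⟩
        · right; right; omega
      · right; left; omega
  have c1 := Finset.card_le_card h1
  have c2 := (Finset.card_le_card h2).trans (Finset.card_union_le _ _)
  have c3 := Finset.card_union_le (Cset x n m) (Bset n m)
  have c4 : ((Finset.range n).image (fun i => (i, i))).card ≤ n :=
    Finset.card_image_le.trans (by simp)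
  have c5 := card_Bset n m
  have c6 : (Dset x n m).card ≤ (Cset x n m).card + (2 * m + 3) * n := by nlinarith
  have c1' : ((Cset x n m).card : ℝ) ≤ (Dset x n m).card := by exact_mod_cast c1
  have c6' : ((Dset x n m).card : ℝ) ≤ (Cset x n m).card + (2 * m + 3) * n := by exact_mod_cast c6
  rw [abs_le]
  constructor <;> [skip; linarith]
  have : (0 : ℝ) ≤ (2 * m + 3) * n := by positivity
  linarith


def word (x : ℕ → Bool) (m i : ℕ) : Fin m → Bool := fun t => x (i + (t : ℕ))

theorem eqw_iff_word (x : ℕ → Bool) (m i j : ℕ) : eqw x m i j ↔ word x m i = word x m j := by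
  constructor
  · intro h
    funext t
    exact h t t.2
  · intro h k hk
    exact congrFun h ⟨k, hk⟩

noncomputable def cnt (x : ℕ → Bool) (m : ℕ) (u : Fin m → Bool) (n : ℕ) : ℕ :=
  ((Finset.range n).filter (fun i => word x m i = u)).card

theorem sum_cnt (x : ℕ → Bool) (m n : ℕ) : ∑ u : Fin m → Bool, cnt x m u n = n := by
  unfold cnt
  rw [← Finset.card_eq_sum_card_fiberwise (f := word x m) (t := Finset.univ)]
  · simp
  · intro i _
    simp

theorem card_Dset (x : ℕ → Bool) (m n : ℕ) :
    (Dset x n m).card = ∑ u : Fin m → Bool, (cnt x m u n) ^ 2 := by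
  rw [Finset.card_eq_sum_card_fiberwise (f := fun p : ℕ × ℕ => word x m p.1) (t := Finset.univ)]
  · apply Finset.sum_congr rfl
    intro u _
    rw [sq, cnt, ← Finset.card_product]
    congr 1
    ext ⟨i, j⟩
    simp only [Dset, Finset.mem_filter, Finset.mem_product, Finset.mem_range, eqw_iff_word]
    constructor
    · rintro ⟨⟨⟨h1, h2⟩, h3⟩, h4⟩
      exact ⟨⟨h1, h4⟩, h2, h3 ▸ h4⟩
    · rintro ⟨⟨h1, h2⟩, h3, h4⟩
      exact ⟨⟨⟨h1, h3⟩, h2.trans h4.symm⟩, h2⟩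
  · intro i _
    simp

theorem Dset_lower (x : ℕ → Bool) (m n : ℕ) : (n : ℝ) ^ 2 ≤ 2 ^ m * (Dset x n m).card := by
  have h := sq_sum_le_card_mul_sum_sq (s := (Finset.univ : Finset (Fin m → Bool)))
    (f := fun u => cnt x m u n)
  rw [sum_cnt, ← card_Dset] at h
  simp only [Finset.card_univ, Fintype.card_fun, Fintype.card_bool, Fintype.card_fin] at h
  exact_mod_cast h

theorem Dset_anti (x : ℕ → Bool) (m n : ℕ) : (Dset x n (m + 1)).card ≤ (Dset x n m).card := by
  apply Finset.card_le_card
  intro p h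
  unfold Dset at *
  rw [Finset.mem_filter, eqw_succ] at h
  rw [Finset.mem_filter]
  exact ⟨h.1, h.2.1⟩

theorem tendsto_close (a b : ℕ → ℝ) (C L : ℝ) (h : ∀ n : ℕ, |b n - a n| ≤ C * n)
    (ha : Tendsto (fun n : ℕ => a n / (n : ℝ) ^ 2) atTop (𝓝 L)) :
    Tendsto (fun n : ℕ => b n / (n : ℝ) ^ 2) atTop (𝓝 L) := by
  have h0 : Tendsto (fun n : ℕ => (b n - a n) / (n : ℝ) ^ 2) atTop (𝓝 0) := by
    apply squeeze_zero_norm' (a := fun n : ℕ => C / (n : ℝ))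
    · filter_upwards [eventually_gt_atTop 0] with n hn
      have hn' : (0 : ℝ) < n := by exact_mod_cast hn
      rw [Real.norm_eq_abs, abs_div, abs_of_pos (by positivity : (0 : ℝ) < (n : ℝ) ^ 2),
        div_le_div_iff₀ (by positivity) hn']
      have := h n
      nlinarith
    · exact tendsto_const_div_atTop_nhds_zero_nat C
  have := ha.add h0
  simp only [add_zero] at this
  refine this.congr (fun n => ?_)
  ring

theorem tendsto_sq_sub (a : ℕ → ℝ) (L : ℝ)
    (ha : Tendsto (fun n : ℕ => a n / (n : ℝ) ^ 2) atTop (𝓝 L)) :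
    Tendsto (fun n : ℕ => a n / ((n : ℝ) ^ 2 - n)) atTop (𝓝 L) := by
  have h1 : Tendsto (fun n : ℕ => 1 - 1 / (n : ℝ)) atTop (𝓝 1) := by
    have := (tendsto_const_nhds (x := (1 : ℝ))).sub (tendsto_const_div_atTop_nhds_zero_nat (1 : ℝ))
    simpa using this
  have := ha.div h1 one_ne_zero
  rw [div_one] at this
  refine this.congr' ?_
  filter_upwards [eventually_gt_atTop 1] with n hn
  have hn' : (1 : ℝ) < n := by exact_mod_cast hn
  have h2 : (n : ℝ) - 1 ≠ 0 := by linarith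
  have h3 : (n : ℝ) ≠ 0 := by linarith
  have h4 : (n : ℝ) ^ 2 - n ≠ 0 := by
    rw [show (n : ℝ) ^ 2 - n = n * (n - 1) by ring]
    positivity
  have h5 : 1 - 1 / (n : ℝ) ≠ 0 := by
    rw [show 1 - 1 / (n : ℝ) = (n - 1) / n by field_simp]
    positivity
  simp only [Pi.div_apply]
  rw [div_div]
  congr 1
  field_simp

theorem assemble (x : ℕ → Bool) (κ : ℕ → ℝ)
    (hκ : ∀ m, Tendsto (fun n : ℕ => ((Dset x n m).card : ℝ) / (n : ℝ) ^ 2) atTop (𝓝 (κ m)))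
    (hκ0 : Tendsto κ atTop (𝓝 0)) (ℓ : ℕ) (hℓ : 1 ≤ ℓ) :
    ∃ dK : ℕ → ℝ,
      (∀ l : ℕ, 1 ≤ l → HasDens (Kset x l) (dK l)) ∧
      Summable (fun k : ℕ => ((ℓ + k : ℕ) : ℝ) * dK (ℓ + k)) ∧
      0 < ∑' k : ℕ, ((ℓ + k : ℕ) : ℝ) * dK (ℓ + k) ∧
      Tendsto (fun n : ℕ => RRate seqDist shift x n (1/2 : ℝ) ℓ) atTop
        (𝓝 (∑' k : ℕ, ((ℓ + k : ℕ) : ℝ) * dK (ℓ + k))) := by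
  have hC : ∀ m, Tendsto (fun n : ℕ => ((Cset x n m).card : ℝ) / (n : ℝ) ^ 2) atTop (𝓝 (κ m)) := by
    intro m
    apply tendsto_close (fun n => ((Dset x n m).card : ℝ)) _ (2 * m + 3) _ _ (hκ m)
    intro n
    rw [abs_sub_comm]
    exact Dset_close x n m
  have hanti : Antitone κ := by
    apply antitone_nat_of_succ_le
    intro m
    apply le_of_tendsto_of_tendsto' (hκ (m + 1)) (hκ m)
    intro n
    have : ((Dset x n (m + 1)).card : ℝ) ≤ (Dset x n m).card := by exact_mod_cast Dset_anti x m n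
    gcongr
  have hpos : ∀ m, 0 < κ m := by
    intro m
    have : (1 : ℝ) / 2 ^ m ≤ κ m := by
      apply ge_of_tendsto (hκ m)
      filter_upwards [eventually_gt_atTop 0] with n hn
      have hn' : (0 : ℝ) < n := by exact_mod_cast hn
      rw [div_le_div_iff₀ (by positivity) (by positivity)]
      have := Dset_lower x m n
      linarith
    exact lt_of_lt_of_le (by positivity) this
  have hdens : ∀ l : ℕ, 1 ≤ l → HasDens (Kset x l) (κ l - 2 * κ (l + 1) + κ (l + 2)) := by
    intro l hl
    unfold HasDens densCount
    apply tendsto_close (fun n => (Nlines seqDist shift x n (1 / 2 : ℝ) l : ℝ)) _ (2 * (l + 1)) _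
      (fun n => Kset_close x n l hl)
    have := ((hC l).sub ((hC (l + 1)).const_mul 2)).add (hC (l + 2))
    refine this.congr (fun n => ?_)
    rw [Nlines_eq x n l hl]
    ring
  have hnn : ∀ l : ℕ, 1 ≤ l → 0 ≤ κ l - 2 * κ (l + 1) + κ (l + 2) := by
    intro l hl
    apply ge_of_tendsto' (hdens l hl)
    intro n
    unfold densCount
    positivity
  -- the tail
  have hδ : ∀ m, 1 ≤ m → ∀ k, κ (m + k) - κ (m + k + 1) ≤ κ m - κ (m + 1) := by
    intro m hm k
    induction k with
    | zero => simp
    | succ k ih =>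
      have := hnn (m + k) (by omega)
      rw [show m + (k + 1) = m + k + 1 by omega, show m + k + 1 + 1 = m + k + 2 by omega]
      linarith
  have hδsum : ∀ m, 1 ≤ m → ∀ j : ℕ, (j : ℝ) * (κ (m + j) - κ (m + j + 1)) ≤ κ m - κ (m + j) := by
    intro m hm j
    have h1 : ∑ i ∈ Finset.range j, (κ (m + j) - κ (m + j + 1)) ≤
        ∑ i ∈ Finset.range j, (κ (m + i) - κ (m + i + 1)) := by
      apply Finset.sum_le_sum
      intro i hi
      rw [Finset.mem_range] at hi
      have := hδ (m + i) (by omega) (j - i)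
      rwa [show m + i + (j - i) = m + j by omega] at this
    rw [Finset.sum_const, Finset.card_range, nsmul_eq_mul] at h1
    have h2 := Finset.sum_range_sub' (fun i => κ (m + i)) j
    simp only [add_zero] at h2
    have h3 : ∑ i ∈ Finset.range j, (κ (m + i) - κ (m + i + 1)) = κ m - κ (m + j) := h2
    linarith
  have hA0 : Tendsto (fun m : ℕ => (m : ℝ) * κ m - ((m : ℝ) - 1) * κ (m + 1)) atTop (𝓝 0) := by
    have hhalf : Tendsto (fun m : ℕ => m / 2) atTop atTop :=
      Nat.tendsto_div_const_atTop (by norm_num)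
    have hup : Tendsto (fun m : ℕ => κ m + 2 * κ (m / 2)) atTop (𝓝 0) := by
      have := hκ0.add ((hκ0.comp hhalf).const_mul 2)
      simpa using this
    apply squeeze_zero' _ _ hup
    · filter_upwards [eventually_ge_atTop 1] with m hm
      have h1 : (1 : ℝ) ≤ m := by exact_mod_cast hm
      have := hanti (Nat.le_succ m)
      have := hpos m
      simp only [Nat.succ_eq_add_one] at *
      nlinarith
    · filter_upwards [eventually_ge_atTop 2] with m hm
      have h1 := hδsum (m / 2) (by omega) (m - m / 2)
      rw [show m / 2 + (m - m / 2) = m by omega] at h1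
      have h2 : ((m : ℝ) - 1) ≤ 2 * ((m - m / 2 : ℕ) : ℝ) := by
        have : m ≤ 2 * (m - m / 2) := by omega
        have : (m : ℝ) ≤ 2 * ((m - m / 2 : ℕ) : ℝ) := by exact_mod_cast this
        linarith
      have h3 := hanti (Nat.le_succ m)
      have h4 := hpos m
      simp only [Nat.succ_eq_add_one] at h3
      have h5 : ((m : ℝ) - 1) * (κ m - κ (m + 1)) ≤
          2 * ((m - m / 2 : ℕ) : ℝ) * (κ m - κ (m + 1)) := by
        apply mul_le_mul_of_nonneg_right h2
        linarith
      nlinarith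
  have hsum : HasSum (fun k : ℕ => ((ℓ + k : ℕ) : ℝ) *
      (κ (ℓ + k) - 2 * κ (ℓ + k + 1) + κ (ℓ + k + 2)))
      ((ℓ : ℝ) * κ ℓ - ((ℓ : ℝ) - 1) * κ (ℓ + 1)) := by
    rw [hasSum_iff_tendsto_nat_of_nonneg]
    · simp only [telescope]
      have h1 : Tendsto (fun M : ℕ => ℓ + M) atTop atTop := tendsto_atTop_mono (fun M => Nat.le_add_left M ℓ) tendsto_id
      have := (tendsto_const_nhds (x := (ℓ : ℝ) * κ ℓ - ((ℓ : ℝ) - 1) * κ (ℓ + 1))).sub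
        (hA0.comp h1)
      simpa using this
    · intro k
      exact mul_nonneg (by positivity) (hnn (ℓ + k) (by omega))
  refine ⟨fun l => κ l - 2 * κ (l + 1) + κ (l + 2), hdens, hsum.summable, ?_, ?_⟩
  · rw [hsum.tsum_eq]
    have h1 : (1 : ℝ) ≤ ℓ := by exact_mod_cast hℓ
    have h2 := hanti (Nat.le_succ ℓ)
    have h3 := hpos ℓ
    simp only [Nat.succ_eq_add_one] at h2
    nlinarith
  · rw [hsum.tsum_eq]
    simp only [RRate_eq x _ ℓ hℓ]
    apply tendsto_sq_sub
    have := ((hC ℓ).const_mul (ℓ : ℝ)).sub ((hC (ℓ + 1)).const_mul ((ℓ : ℝ) - 1))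
    refine this.congr (fun n => ?_)
    ring


theorem exists_lim (S : ℕ → ℝ)
    (h : ∀ ε > 0, ∃ L C : ℝ, ∀ n : ℕ, |S n - L * n| ≤ ε * n + C) :
    ∃ L, Tendsto (fun n : ℕ => S n / n) atTop (𝓝 L) := by
  apply cauchySeq_tendsto_of_complete
  rw [Metric.cauchySeq_iff']
  intro ε hε
  obtain ⟨L, C, hLC⟩ := h (ε / 8) (by positivity)
  have hc : ∀ n : ℕ, 0 < n → C ≤ ε / 8 * n → |S n / n - L| ≤ ε / 4 := by
    intro n hn hC
    have hn' : (0 : ℝ) < n := by exact_mod_cast hn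
    rw [show S n / n - L = (S n - L * n) / n by field_simp, abs_div, abs_of_pos hn',
      div_le_iff₀ hn']
    linarith [hLC n]
  obtain ⟨N, hN⟩ := exists_nat_gt (C / (ε / 8))
  rw [div_lt_iff₀ (by positivity)] at hN
  refine ⟨N + 1, fun n hn => ?_⟩
  have hmono : ∀ n : ℕ, N + 1 ≤ n → C ≤ ε / 8 * n := by
    intro n hn
    have : (N : ℝ) + 1 ≤ n := by exact_mod_cast hn
    nlinarith
  have h1 := abs_le.1 (hc n (by omega) (hmono n hn))
  have h2 := abs_le.1 (hc (N + 1) (by omega) (hmono _ le_rfl))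
  rw [Real.dist_eq, abs_lt]
  constructor <;> linarith [h1.1, h1.2, h2.1, h2.2]

theorem sum_blocks (g : ℕ → ℝ) (Q N : ℕ) :
    ∑ i ∈ Finset.range (Q * N), g i =
      ∑ j ∈ Finset.range N, ∑ r ∈ Finset.range Q, g (Q * j + r) := by
  induction N with
  | zero => simp
  | succ N ih => rw [Finset.sum_range_succ, ← ih, Nat.mul_succ, Finset.sum_range_add]

theorem sum_near (g : ℕ → ℝ) (hg : ∀ i, |g i| ≤ 1) (Q n : ℕ) (hQ : 0 < Q) :
    |∑ i ∈ Finset.range n, g i - ∑ i ∈ Finset.range (Q * (n / Q)), g i| ≤ Q := by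
  conv_lhs => rw [show Finset.range n = Finset.range (Q * (n / Q) + n % Q) by
    rw [Nat.div_add_mod]]
  rw [Finset.sum_range_add, add_sub_cancel_left]
  refine (Finset.abs_sum_le_sum_abs _ _).trans ?_
  refine (Finset.sum_le_sum (fun i _ => hg _)).trans ?_
  simp only [Finset.sum_const, Finset.card_range, nsmul_eq_mul, mul_one]
  exact_mod_cast (Nat.mod_lt n hQ).le

/-- indicator of the letter true -/
noncomputable def ind (x : ℕ → Bool) (i : ℕ) : ℝ := if x i = true then 1 else 0

theorem letter_freq (x : ℕ → Bool) (Q : ℕ) (α β : ℝ) (hQ : 2 ≤ Q)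
    (hα1 : 1 ≤ α) (hα2 : α ≤ Q - 1) (hβ1 : 1 ≤ β) (hβ2 : β ≤ Q - 1)
    (hblock : ∀ j, ∑ r ∈ Finset.range Q, ind x (Q * j + r) = if x j = true then α else β) :
    ∃ p : ℝ, ∀ ε > 0, ∃ C : ℝ, 0 ≤ C ∧
      ∀ n : ℕ, |∑ i ∈ Finset.range n, ind x i - p * n| ≤ ε * n + C := by
  have hQ' : (2 : ℝ) ≤ Q := by exact_mod_cast hQ
  have hden : (0 : ℝ) < Q - α + β := by linarith
  set p := β / (Q - α + β) with hp
  have hp0 : 0 ≤ p := by positivity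
  have hp1 : p ≤ 1 := by
    rw [hp, div_le_one hden]
    linarith
  have hpe : p * (Q - α + β) = β := by rw [hp]; field_simp
  set e : ℕ → ℝ := fun n => ∑ i ∈ Finset.range n, (ind x i - p) with he
  have he' : ∀ n : ℕ, ∑ i ∈ Finset.range n, ind x i - p * n = e n := by
    intro n
    simp only [he, Finset.sum_sub_distrib, Finset.sum_const, Finset.card_range, nsmul_eq_mul]
    ring
  have heQ : ∀ N, e (Q * N) = (α - β) * e N := by
    intro N
    simp only [he]
    rw [sum_blocks, Finset.mul_sum]
    apply Finset.sum_congr rfl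
    intro j _
    rw [Finset.sum_sub_distrib, hblock]
    simp only [Finset.sum_const, Finset.card_range, nsmul_eq_mul, ind]
    split_ifs <;> linarith
  have hstep : ∀ n, |e n| ≤ (Q - 1) * |e (n / Q)| + Q := by
    intro n
    have h1 := sum_near (fun i => ind x i - p) (by
      intro i
      simp only [ind]
      rw [abs_le]
      split_ifs <;> constructor <;> linarith) Q n (by omega)
    have h2 : |e n - e (Q * (n / Q))| ≤ Q := h1
    rw [heQ] at h2
    have h3 : |(α - β) * e (n / Q)| ≤ (Q - 1) * |e (n / Q)| := by
      rw [abs_mul]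
      apply mul_le_mul_of_nonneg_right _ (abs_nonneg _)
      rw [abs_le]
      constructor <;> linarith
    have h4 := abs_sub_abs_le_abs_sub (e n) ((α - β) * e (n / Q))
    linarith
  have hmain : ∀ k : ℕ, ∃ C : ℝ, 0 ≤ C ∧ ∀ n : ℕ, |e n| ≤ (((Q : ℝ) - 1) / Q) ^ k * n + C := by
    intro k
    induction k with
    | zero =>
      refine ⟨0, le_rfl, fun n => ?_⟩
      simp only [pow_zero, one_mul, add_zero, he]
      refine (Finset.abs_sum_le_sum_abs _ _).trans ?_
      refine (Finset.sum_le_sum (g := fun _ => (1 : ℝ)) (fun i _ => ?_)).trans ?_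
      · simp only [ind]
        rw [abs_le]
        split_ifs <;> constructor <;> linarith
      · simp
    | succ k ih =>
      obtain ⟨C, hC0, hC⟩ := ih
      refine ⟨(Q - 1) * C + Q, by nlinarith, fun n => ?_⟩
      have h1 := hstep n
      have h2 := hC (n / Q)
      have h3 : ((n / Q : ℕ) : ℝ) ≤ n / Q := Nat.cast_div_le
      have hθ : (0 : ℝ) ≤ (((Q : ℝ) - 1) / Q) ^ k := by
        apply pow_nonneg
        apply div_nonneg <;> linarith
      have h4 : (((Q : ℝ) - 1) / Q) ^ k * ((n / Q : ℕ) : ℝ) ≤ (((Q : ℝ) - 1) / Q) ^ k * (n / Q) :=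
        mul_le_mul_of_nonneg_left h3 hθ
      have h5 : (Q - 1) * |e (n / Q)| ≤ (Q - 1) * ((((Q : ℝ) - 1) / Q) ^ k * (n / Q) + C) := by
        apply mul_le_mul_of_nonneg_left _ (by linarith)
        linarith
      calc |e n| ≤ (Q - 1) * ((((Q : ℝ) - 1) / Q) ^ k * (n / Q) + C) + Q := by linarith
        _ = _ := by rw [pow_succ]; ring
  refine ⟨p, fun ε hε => ?_⟩
  obtain ⟨k, hk⟩ := exists_pow_lt_of_lt_one hε (y := ((Q : ℝ) - 1) / Q) (by
    rw [div_lt_one (by linarith)]; linarith)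
  obtain ⟨C, hC0, hC⟩ := hmain k
  refine ⟨C, hC0, fun n => ?_⟩
  rw [he']
  refine (hC n).trans ?_
  have : (((Q : ℝ) - 1) / Q) ^ k * n ≤ ε * n :=
    mul_le_mul_of_nonneg_right hk.le (by positivity)
  linarith

theorem word_block_close (x : ℕ → Bool) (m Q : ℕ) (u : Fin m → Bool) (j j' : ℕ)
    (h : ∀ s < Q, x (Q * j + s) = x (Q * j' + s)) :
    |∑ r ∈ Finset.range Q, (if word x m (Q * j + r) = u then (1 : ℝ) else 0) -
      ∑ r ∈ Finset.range Q, (if word x m (Q * j' + r) = u then (1 : ℝ) else 0)| ≤ m := by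
  rw [← Finset.sum_sub_distrib]
  refine (Finset.abs_sum_le_sum_abs _ _).trans ?_
  have h1 : ∀ r ∈ Finset.range Q, |(if word x m (Q * j + r) = u then (1 : ℝ) else 0) -
      (if word x m (Q * j' + r) = u then (1 : ℝ) else 0)| ≤ if Q < r + m then 1 else 0 := by
    intro r hr
    by_cases hrm : Q < r + m
    · rw [if_pos hrm]
      split_ifs <;> norm_num
    · have : word x m (Q * j + r) = word x m (Q * j' + r) := by
        funext t
        simp only [word]
        have := t.2
        rw [add_assoc, add_assoc]
        exact h _ (by omega)
      rw [this, if_neg hrm]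
      simp
  refine (Finset.sum_le_sum h1).trans ?_
  rw [Finset.sum_boole]
  have : ((Finset.range Q).filter (fun r => Q < r + m)).card ≤ m := by
    calc _ ≤ (Finset.Ico (Q - m) Q).card := by
          apply Finset.card_le_card
          intro r
          simp only [Finset.mem_filter, Finset.mem_range, Finset.mem_Ico]
          omega
      _ ≤ m := by simp only [Nat.card_Ico]; omega
  exact_mod_cast this

theorem word_freq (x : ℕ → Bool) (q : ℕ) (hq : 2 ≤ q)
    (H1 : ∀ k j j', x j = x j' → ∀ s < q ^ k, x (q ^ k * j + s) = x (q ^ k * j' + s))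
    (H2 : ∃ K, ∀ j (a : Bool), ∃ r < q ^ K, x (q ^ K * j + r) = a)
    (m : ℕ) (u : Fin m → Bool) :
    ∃ L, Tendsto (fun n : ℕ => (cnt x m u n : ℝ) / n) atTop (𝓝 L) := by
  obtain ⟨K, hK⟩ := H2
  have hj : ∀ a : Bool, ∃ j, x j = a := by
    intro a
    obtain ⟨r, _, hr⟩ := hK 0 a
    exact ⟨_, hr⟩
  choose J hJ using hj
  -- letter frequencies
  have hlet : ∃ p : ℝ, ∀ ε > 0, ∃ C : ℝ, 0 ≤ C ∧
      ∀ n : ℕ, |∑ i ∈ Finset.range n, ind x i - p * n| ≤ ε * n + C := by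
    set Q := q ^ K with hQ
    have hlow : ∀ a, (1 : ℝ) ≤ ∑ r ∈ Finset.range Q, ind x (Q * J a + r) := by
      intro a
      obtain ⟨r, hr, hr'⟩ := hK (J a) true
      have := Finset.single_le_sum (f := fun r => ind x (Q * J a + r)) (s := Finset.range Q)
        (fun i _ => by simp only [ind]; split_ifs <;> norm_num) (Finset.mem_range.2 hr)
      refine le_trans ?_ this
      simp [ind, hr']
    have hup : ∀ a, ∑ r ∈ Finset.range Q, ind x (Q * J a + r) ≤ (Q : ℝ) - 1 := by
      intro a
      obtain ⟨r, hr, hr'⟩ := hK (J a) false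
      have := Finset.single_le_sum (f := fun r => 1 - ind x (Q * J a + r)) (s := Finset.range Q)
        (fun i _ => by simp only [ind]; split_ifs <;> norm_num) (Finset.mem_range.2 hr)
      simp only [Finset.sum_sub_distrib, Finset.sum_const, Finset.card_range, nsmul_eq_mul,
        mul_one] at this
      have h0 : ind x (Q * J a + r) = 0 := by simp [ind, hr']
      linarith
    have hQ2 : 2 ≤ Q := by
      have : (2 : ℝ) ≤ Q := by linarith [hlow true, hup true]
      exact_mod_cast this
    apply letter_freq x Q _ _ hQ2 (hlow true) (hup true) (hlow false) (hup false)
    intro j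
    have hjj : ∀ a, x j = a → ∑ r ∈ Finset.range Q, ind x (Q * j + r) =
        ∑ r ∈ Finset.range Q, ind x (Q * J a + r) := by
      intro a ha
      apply Finset.sum_congr rfl
      intro r hr
      simp only [ind]
      rw [H1 K j (J a) (by rw [ha, hJ]) r (Finset.mem_range.1 hr)]
    split_ifs with hx
    · exact hjj true hx
    · exact hjj false (by simpa using hx)
  obtain ⟨p, hp⟩ := hlet
  apply exists_lim
  intro ε hε
  obtain ⟨k, hk⟩ : ∃ k : ℕ, 2 * (m : ℝ) / ε < (q : ℝ) ^ k :=
    pow_unbounded_of_one_lt _ (by exact_mod_cast (by omega : 1 < q))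
  set Q := q ^ k with hQ
  have hQ0 : 0 < Q := by positivity
  have hQ0' : (0 : ℝ) < Q := by exact_mod_cast hQ0
  have hk' : (m : ℝ) ≤ ε / 2 * Q := by
    rw [div_lt_iff₀ hε] at hk
    rw [hQ]
    push_cast
    linarith
  set g : ℕ → ℝ := fun i => if word x m i = u then (1 : ℝ) else 0 with hg
  have hcnt : ∀ n, (cnt x m u n : ℝ) = ∑ i ∈ Finset.range n, g i := by
    intro n
    simp only [hg, cnt, Finset.sum_boole]
  set G : Bool → ℝ := fun a => ∑ r ∈ Finset.range Q, g (Q * J a + r) with hG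
  have hGb : ∀ a, 0 ≤ G a ∧ G a ≤ Q := by
    intro a
    constructor
    · apply Finset.sum_nonneg
      intro i _
      simp only [hg]
      split_ifs <;> norm_num
    · refine (Finset.sum_le_sum (g := fun _ => (1 : ℝ)) (fun i _ => ?_)).trans ?_
      · simp only [hg]
        split_ifs <;> norm_num
      · simp
  obtain ⟨C, hC0, hC⟩ := hp (ε / 2) (by positivity)
  set L := G false + (G true - G false) * p with hL
  have key : ∀ N : ℕ, |∑ i ∈ Finset.range (Q * N), g i - L * N| ≤ m * N + Q * (ε / 2 * N + C) := by
    intro N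
    have e1 : ∑ j ∈ Finset.range N, G (x j) =
        G false * N + (G true - G false) * ∑ i ∈ Finset.range N, ind x i := by
      rw [Finset.mul_sum, mul_comm (G false), ← nsmul_eq_mul, ← Finset.card_range N,
        ← Finset.sum_const, Finset.card_range, ← Finset.sum_add_distrib]
      apply Finset.sum_congr rfl
      intro j _
      simp only [ind]
      cases x j <;> simp
    have e2 : |∑ i ∈ Finset.range (Q * N), g i - ∑ j ∈ Finset.range N, G (x j)| ≤ m * N := by
      rw [sum_blocks, ← Finset.sum_sub_distrib]
      refine (Finset.abs_sum_le_sum_abs _ _).trans ?_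
      refine (Finset.sum_le_sum (g := fun _ => (m : ℝ)) (fun j _ => ?_)).trans ?_
      · exact word_block_close x m Q u j (J (x j)) (H1 k j _ (by rw [hJ]))
      · simp only [Finset.sum_const, Finset.card_range, nsmul_eq_mul]
        linarith
    have e3 : |∑ j ∈ Finset.range N, G (x j) - L * N| ≤ Q * (ε / 2 * N + C) := by
      rw [e1, show G false * N + (G true - G false) * ∑ i ∈ Finset.range N, ind x i - L * N =
        (G true - G false) * (∑ i ∈ Finset.range N, ind x i - p * N) by rw [hL]; ring, abs_mul]
      apply mul_le_mul _ (hC N) (abs_nonneg _) hQ0'.le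
      rw [abs_le]
      constructor <;> linarith [(hGb true).1, (hGb true).2, (hGb false).1, (hGb false).2]
    have := abs_sub_le (∑ i ∈ Finset.range (Q * N), g i) (∑ j ∈ Finset.range N, G (x j)) (L * N)
    linarith
  refine ⟨L / Q, Q + Q * C + |L|, fun n => ?_⟩
  rw [hcnt]
  have f1 := sum_near g (by intro i; simp only [hg]; split_ifs <;> norm_num) Q n hQ0
  have f2 := key (n / Q)
  have hle : ((n / Q : ℕ) : ℝ) * Q ≤ n := by exact_mod_cast Nat.div_mul_le_self n Q
  have hge : (n : ℝ) ≤ ((n / Q : ℕ) : ℝ) * Q + Q := by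
    have h1 := Nat.div_add_mod n Q
    have h2 := Nat.mod_lt n hQ0
    have : n ≤ (n / Q) * Q + Q := by nlinarith
    exact_mod_cast this
  have f3 : |L * ((n / Q : ℕ) : ℝ) - L / Q * n| ≤ |L| := by
    rw [show L * ((n / Q : ℕ) : ℝ) - L / Q * n = L * ((((n / Q : ℕ) : ℝ) * Q - n) / Q) by
      field_simp, abs_mul]
    apply mul_le_of_le_one_right (abs_nonneg _)
    rw [abs_div, abs_of_pos hQ0', div_le_one hQ0', abs_le]
    constructor <;> linarith
  have f4 : (m : ℝ) * ((n / Q : ℕ) : ℝ) ≤ ε / 2 * n := by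
    calc (m : ℝ) * ((n / Q : ℕ) : ℝ) ≤ ε / 2 * Q * ((n / Q : ℕ) : ℝ) := by gcongr
      _ = ε / 2 * (((n / Q : ℕ) : ℝ) * Q) := by ring
      _ ≤ ε / 2 * n := by gcongr
  have f5 : (Q : ℝ) * (ε / 2 * ((n / Q : ℕ) : ℝ) + C) ≤ ε / 2 * n + Q * C := by
    have : ε / 2 * (((n / Q : ℕ) : ℝ) * Q) ≤ ε / 2 * n := by gcongr
    linarith
  have f6 := abs_sub_le (∑ i ∈ Finset.range n, g i) (∑ i ∈ Finset.range (Q * (n / Q)), g i)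
    (L / Q * n)
  have f7 := abs_sub_le (∑ i ∈ Finset.range (Q * (n / Q)), g i) (L * ((n / Q : ℕ) : ℝ))
    (L / Q * n)
  linarith


theorem separation (x : ℕ → Bool)
    (H3 : ∀ d, 1 ≤ d → ∃ B, 0 < B ∧ ∀ t, ∃ r < B, x (B * t + r) ≠ x (B * t + r + d)) (N : ℕ) :
    ∃ m, ∀ i d, 1 ≤ d → d ≤ N → ¬ eqw x m i (i + d) := by
  induction N with
  | zero => exact ⟨0, fun i d h1 h2 => by omega⟩
  | succ N ih =>
    obtain ⟨m, hm⟩ := ih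
    obtain ⟨B, hB, hB'⟩ := H3 (N + 1) (by omega)
    refine ⟨max m (2 * B), fun i d h1 h2 he => ?_⟩
    rcases Nat.lt_or_ge N d with h | h
    · have hd : d = N + 1 := by omega
      obtain ⟨r, hr, hr'⟩ := hB' (i / B + 1)
      apply hr'
      have e1 := Nat.div_add_mod i B
      have e2 := Nat.mod_lt i hB
      have e3 : B * (i / B + 1) = B * (i / B) + B := by ring
      have := he (B * (i / B + 1) + r - i) (by
        apply lt_of_lt_of_le _ (le_max_right _ _)
        omega)
      rw [show i + (B * (i / B + 1) + r - i) = B * (i / B + 1) + r by omega,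
        show i + d + (B * (i / B + 1) + r - i) = B * (i / B + 1) + r + (N + 1) by omega] at this
      exact this
    · exact hm i d h1 h (fun k hk => he k (lt_of_lt_of_le hk (le_max_left _ _)))

theorem Dset_upper (x : ℕ → Bool) (N m n : ℕ) (hN : 1 ≤ N)
    (h : ∀ i d, 1 ≤ d → d ≤ N → ¬ eqw x m i (i + d)) :
    (Dset x n m).card ≤ n * (n / N + 1) := by
  rw [Finset.card_eq_sum_card_fiberwise (f := fun p : ℕ × ℕ => p.1) (t := Finset.range n)]
  · refine (Finset.sum_le_sum (g := fun _ => n / N + 1) (fun i _ => ?_)).trans ?_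
    · rw [← Finset.card_range (n / N + 1)]
      apply Finset.card_le_card_of_injOn (fun p => p.2 / N)
      · rintro ⟨a, b⟩ hab
        simp only [Dset, Finset.coe_filter, Finset.mem_filter, Finset.mem_product,
          Finset.mem_range, Set.mem_ofPred_eq] at hab
        simp only [Finset.coe_range, Set.mem_Iio]
        exact Nat.lt_succ_of_le (Nat.div_le_div_right hab.1.1.2.le)
      · have aux : ∀ b b', eqw x m i b → eqw x m i b' → b / N = b' / N → b ≤ b' → b = b' := by
          intro b b' h1 h2 h3 h4
          by_contra hne
          apply h b (b' - b) (by omega)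
          · have e1 := Nat.div_add_mod b N
            have e2 := Nat.div_add_mod b' N
            have e3 := Nat.mod_lt b hN
            have e4 := Nat.mod_lt b' hN
            rw [h3] at e1
            omega
          · rw [show b + (b' - b) = b' by omega]
            rw [eqw_iff_word] at *
            rw [← h1, h2]
        rintro ⟨a, b⟩ hab ⟨a', b'⟩ hab' hE
        simp only [Dset, Finset.coe_filter, Finset.mem_filter, Finset.mem_product,
          Finset.mem_range, Set.mem_ofPred_eq] at hab hab'
        obtain ⟨⟨_, h1⟩, rfl⟩ := hab
        obtain ⟨⟨_, h2⟩, rfl⟩ := hab'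
        simp only at hE
        rcases le_total b b' with hb | hb
        · rw [aux b b' h1 h2 hE hb]
        · rw [aux b' b h2 h1 hE.symm hb]
    · simp
  · rintro ⟨a, b⟩ hab
    simp only [Dset, Finset.coe_filter, Finset.mem_product, Set.mem_ofPred_eq] at hab
    exact hab.1.1

theorem substWord_cons (ζ : Bool → List Bool) (a : Bool) (w : List Bool) :
    substWord ζ (a :: w) = ζ a ++ substWord ζ w := rfl

theorem substWord_length (ζ : Bool → List Bool) (q : ℕ) (h : ∀ a, (ζ a).length = q)
    (w : List Bool) : (substWord ζ w).length = q * w.length := by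
  induction w with
  | nil => simp [substWord]
  | cons a w ih =>
    rw [substWord_cons, List.length_append, ih, h, List.length_cons]
    ring

theorem substWord_getD (ζ : Bool → List Bool) (q : ℕ) (hq : 0 < q) (h : ∀ a, (ζ a).length = q)
    (w : List Bool) (i : ℕ) (hi : i < q * w.length) :
    (substWord ζ w).getD i false = (ζ (w.getD (i / q) false)).getD (i % q) false := by
  induction w generalizing i with
  | nil => simp at hi
  | cons a w ih =>
    rw [substWord_cons]
    rcases Nat.lt_or_ge i q with hlt | hge
    · rw [List.getD_append _ _ _ _ (by rw [h]; exact hlt), Nat.div_eq_of_lt hlt,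
        Nat.mod_eq_of_lt hlt]
      simp
    · rw [List.getD_append_right _ _ _ _ (by rw [h]; exact hge), h]
      rw [List.length_cons, Nat.mul_succ] at hi
      rw [ih (i - q) (by omega)]
      obtain ⟨k, rfl⟩ : ∃ k, i = k + q := ⟨i - q, by omega⟩
      rw [Nat.add_sub_cancel, Nat.add_div_right _ hq, Nat.add_mod_right, List.getD_cons_succ]

theorem iter_length (ζ : Bool → List Bool) (q : ℕ) (h : ∀ a, (ζ a).length = q)
    (k : ℕ) (a : Bool) : ((substWord ζ)^[k] [a]).length = q ^ k := by
  induction k with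
  | zero => simp
  | succ k ih =>
    rw [Function.iterate_succ_apply', substWord_length ζ q h, ih]
    ring

theorem fix_blocks (ζ : Bool → List Bool) (q : ℕ) (hq : 0 < q) (h : ∀ a, (ζ a).length = q)
    (x : ℕ → Bool) (hx : substSeq ζ q x = x) (k : ℕ) :
    ∀ j s, s < q ^ k → x (q ^ k * j + s) = ((substWord ζ)^[k] [x j]).getD s false := by
  induction k with
  | zero =>
    intro j s hs
    have : s = 0 := by simpa using hs
    subst this
    simp
  | succ k ih =>
    intro j s hs
    rw [Function.iterate_succ_apply', substWord_getD ζ q hq h _ _ (by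
      rw [iter_length ζ q h, mul_comm, ← pow_succ]; exact hs)]
    rw [pow_succ] at hs
    rw [← ih j (s / q) (Nat.div_lt_of_lt_mul (by rw [mul_comm]; exact hs))]
    have e : q ^ (k + 1) * j + s = s + q * (q ^ k * j) := by ring
    conv_lhs => rw [← hx]
    unfold substSeq
    rw [e, Nat.add_mul_div_left _ _ hq, Nat.add_mul_mod_self_left, add_comm (s / q)]

end RQAProof

/-- RR_ℓ(x,∞,ε₀) exists and equals Σ_{l≥ℓ} l·dens(K_l) > 0. -/
theorem RRate_eq_sum_densK
    (ζ : Bool → List Bool) (q : ℕ) (hζ : IsConstLenSubst ζ q)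
    (hprim : IsPrimitive ζ) (hap : IsAperiodic ζ)
    (hζ0 : (ζ false).head? = some false)
    (x : ℕ → Bool) (hx0 : x 0 = false) (hxfix : substSeq ζ q x = x)
    (ℓ : ℕ) (hℓ : 1 ≤ ℓ) :
    ∃ dK : ℕ → ℝ,
      (∀ l : ℕ, 1 ≤ l → HasDens (Kset x l) (dK l)) ∧
      Summable (fun k : ℕ => ((ℓ + k : ℕ) : ℝ) * dK (ℓ + k)) ∧
      0 < ∑' k : ℕ, ((ℓ + k : ℕ) : ℝ) * dK (ℓ + k) ∧
      Tendsto (fun n : ℕ => RRate seqDist shift x n (1/2 : ℝ) ℓ) atTop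
        (𝓝 (∑' k : ℕ, ((ℓ + k : ℕ) : ℝ) * dK (ℓ + k))) := by
  obtain ⟨hq, hlen⟩ := hζ
  have hq0 : 0 < q := by omega
  have hV := RQAProof.fix_blocks ζ q hq0 hlen x hxfix
  have H1 : ∀ k j j', x j = x j' → ∀ s < q ^ k, x (q ^ k * j + s) = x (q ^ k * j' + s) := by
    intro k j j' h s hs
    rw [hV k j s hs, hV k j' s hs, h]
  have H2 : ∃ K, ∀ j (a : Bool), ∃ r < q ^ K, x (q ^ K * j + r) = a := by
    obtain ⟨K, _, hK⟩ := hprim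
    refine ⟨K, fun j a => ?_⟩
    obtain ⟨r, hr, hr'⟩ := List.mem_iff_getElem.1 (hK (x j) a)
    have hr2 := hr
    rw [RQAProof.iter_length ζ q hlen] at hr2
    refine ⟨r, hr2, ?_⟩
    rw [hV K j r hr2, List.getD_eq_getElem _ _ hr, hr']
  have H3 : ∀ d, 1 ≤ d → ∃ B, 0 < B ∧ ∀ t, ∃ r < B, x (B * t + r) ≠ x (B * t + r + d) := by
    intro d hd
    obtain ⟨y, hy, hyap⟩ := hap
    obtain ⟨i, hi⟩ := hyap d hd
    obtain ⟨a, k, _, pre, suf, hk⟩ := hy (i + d + 1)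
    obtain ⟨K, hK⟩ := H2
    have hlen2 := congrArg List.length hk
    rw [RQAProof.iter_length ζ q hlen] at hlen2
    simp only [List.length_append, List.length_ofFn] at hlen2
    have hval : ∀ s, s < i + d + 1 → ((substWord ζ)^[k] [a]).getD (pre.length + s) false = y s := by
      intro s hs
      rw [← hk, List.getD_append _ _ _ _ (by simp; omega),
        List.getD_append_right _ _ _ _ (by omega), Nat.add_sub_cancel_left,
        List.getD_eq_getElem _ _ (by simpa using hs), List.getElem_ofFn]
    refine ⟨q ^ k * q ^ K, by positivity, fun t => ?_⟩
    obtain ⟨r, hr, hra⟩ := hK t a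
    have hx1 : ∀ s, s < i + d + 1 → x (q ^ k * (q ^ K * t + r) + (pre.length + s)) = y s := by
      intro s hs
      rw [hV k _ _ (by omega), hra, hval s hs]
    refine ⟨q ^ k * r + (pre.length + i), ?_, ?_⟩
    · calc q ^ k * r + (pre.length + i) < q ^ k * r + q ^ k := by omega
        _ = q ^ k * (r + 1) := by ring
        _ ≤ q ^ k * q ^ K := Nat.mul_le_mul_left _ hr
    · rw [show q ^ k * q ^ K * t + (q ^ k * r + (pre.length + i)) =
        q ^ k * (q ^ K * t + r) + (pre.length + i) by ring, hx1 i (by omega),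
        show q ^ k * (q ^ K * t + r) + (pre.length + i) + d =
        q ^ k * (q ^ K * t + r) + (pre.length + (i + d)) by ring, hx1 (i + d) (by omega)]
      exact hi.symm
  have hfreq := RQAProof.word_freq x q hq H1 H2
  choose L hL using hfreq
  have hκ : ∀ m, Tendsto (fun n : ℕ => ((RQAProof.Dset x n m).card : ℝ) / (n : ℝ) ^ 2) atTop
      (𝓝 (∑ u : Fin m → Bool, (L m u) ^ 2)) := by
    intro m
    have := tendsto_finsetSum (Finset.univ : Finset (Fin m → Bool))
      (fun u _ => (hL m u).pow 2)
    refine this.congr (fun n => ?_)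
    rw [RQAProof.card_Dset]
    push_cast
    rw [Finset.sum_div]
    exact Finset.sum_congr rfl (fun u _ => div_pow _ _ _)
  refine RQAProof.assemble x _ hκ ?_ ℓ hℓ
  rw [Metric.tendsto_atTop]
  intro ε hε
  obtain ⟨N, hN⟩ := exists_nat_gt (1 / ε)
  have hN0 : (0 : ℝ) < N := lt_trans (by positivity) hN
  have hN1 : 1 ≤ N := by exact_mod_cast hN0
  obtain ⟨m, hm⟩ := RQAProof.separation x H3 N
  refine ⟨m, fun M hM => ?_⟩
  have hb : ∑ u : Fin M → Bool, (L M u) ^ 2 ≤ 1 / N := by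
    have h1 : Tendsto (fun n : ℕ => 1 / (N : ℝ) + 1 / (n : ℝ)) atTop (𝓝 (1 / N)) := by
      have := (tendsto_const_nhds (x := 1 / (N : ℝ))).add
        (tendsto_const_div_atTop_nhds_zero_nat (1 : ℝ))
      simpa using this
    apply le_of_tendsto_of_tendsto (hκ M) h1
    filter_upwards [eventually_gt_atTop 0] with n hn
    have hn' : (0 : ℝ) < n := by exact_mod_cast hn
    have h2 := RQAProof.Dset_upper x N M n hN1
      (fun i d h3 h4 h5 => hm i d h3 h4 (fun k hk => h5 k (by omega)))
    have h3 : ((RQAProof.Dset x n M).card : ℝ) ≤ n * (((n / N : ℕ) : ℝ) + 1) := by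
      exact_mod_cast h2
    have h4 : ((n / N : ℕ) : ℝ) ≤ n / N := Nat.cast_div_le
    rw [div_le_iff₀ (by positivity)]
    calc ((RQAProof.Dset x n M).card : ℝ) ≤ n * (((n / N : ℕ) : ℝ) + 1) := h3
      _ ≤ n * ((n : ℝ) / N + 1) := by gcongr
      _ = _ := by field_simp
  have hnn : 0 ≤ ∑ u : Fin M → Bool, (L M u) ^ 2 := Finset.sum_nonneg (fun u _ => sq_nonneg _)
  rw [Real.dist_eq, sub_zero, abs_of_nonneg hnn]
  refine lt_of_le_of_lt hb ?_
  rw [div_lt_iff₀ hε] at hN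
  rw [div_lt_iff₀ hN0]
  linarith
end

section
/- Let ζ be a primitive aperiodic binary substitution of constant length q ≥ 2 with ζ(0) starting with 0 and x = ζ^∞(0). Then for every integer ℓ ≥ 1 the asymptotic entropy of line lengths ENT_ℓ(x,∞,ε₀) = lim_{n→∞} ENT_ℓ(x,n,ε₀) exists and ENT_ℓ(x,∞,ε₀) = log(Σ_{l≥ℓ} dens(K_l)) − (Σ_{l≥ℓ} dens(K_l))^{-1} · Σ_{l≥ℓ} dens(K_l)·log dens(K_l) > 0 (with the convention 0·log 0 = 0). -/
open Filter Topology MeasureTheory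

namespace RQA

section structural

variable {ζ : Bool → List Bool} {q : ℕ} {x : ℕ → Bool}

lemma fix_at (hq : 2 ≤ q) (hxfix : substSeq ζ q x = x) (t r : ℕ) (hr : r < q) :
    x (q * t + r) = (ζ (x t)).getD r false := by
  have h := congrFun hxfix (q * t + r)
  rw [← h]
  unfold substSeq
  have h1 : (q * t + r) / q = t := by
    rw [Nat.mul_add_div (by omega), Nat.div_eq_of_lt hr]; simp
  have h2 : (q * t + r) % q = r := by
    rw [Nat.mul_add_mod, Nat.mod_eq_of_lt hr]
  rw [h1, h2]

lemma block_det (hq : 2 ≤ q) (hxfix : substSeq ζ q x = x) (k : ℕ) :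
    ∀ s t r, r < q ^ k → x s = x t → x (q ^ k * s + r) = x (q ^ k * t + r) := by
  induction k with
  | zero => intro s t r hr h; simp at hr; subst hr; simpa using h
  | succ k ih =>
    intro s t r hr h
    have h1 : r / q < q ^ k := by
      apply Nat.div_lt_of_lt_mul; rw [pow_succ] at hr; linarith [mul_comm q (q^k)]
    have h2 : r % q < q := Nat.mod_lt _ (by omega)
    have h3 : ∀ s, q ^ (k+1) * s + r = q * (q ^ k * s + r / q) + r % q := by
      intro s
      have := Nat.div_add_mod r q
      rw [pow_succ]
      calc q ^ k * q * s + r = q ^ k * q * s + (q * (r / q) + r % q) := by rw [this]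
        _ = _ := by ring
    rw [h3, h3, fix_at hq hxfix _ _ h2, fix_at hq hxfix _ _ h2, ih s t _ h1 h]

lemma substWord_append (u v : List Bool) :
    substWord ζ (u ++ v) = substWord ζ u ++ substWord ζ v := by
  unfold substWord
  induction u with
  | nil => simp
  | cons a u ih => simp [ih]

lemma substWord_single (a : Bool) : substWord ζ [a] = ζ a := by
  simp [substWord]

lemma substWord_seg (hζ : IsConstLenSubst ζ q) (hxfix : substSeq ζ q x = x) (s n : ℕ) :
    substWord ζ ((List.range n).map (fun i => x (s + i))) =
      (List.range (q * n)).map (fun i => x (q * s + i)) := by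
  induction n with
  | zero => simp [substWord]
  | succ n ih =>
    rw [List.range_succ, List.map_append, substWord_append, ih, mul_add, mul_one, List.range_add,
      List.map_append]
    congr 1
    simp only [List.map_cons, List.map_nil, substWord_single]
    apply List.ext_getElem
    · simp [hζ.2]
    · intro i h1 h2
      simp only [List.length_map, List.length_range] at h2
      simp only [List.map_map, List.getElem_map, List.getElem_range, Function.comp]
      rw [← add_assoc, ← mul_add, fix_at hζ.1 hxfix _ _ h2]
      simp [List.getD_eq_getElem?_getD, h1]

lemma substWord_iter (hζ : IsConstLenSubst ζ q) (hxfix : substSeq ζ q x = x) (k s : ℕ) :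
    (substWord ζ)^[k] [x s] = (List.range (q ^ k)).map (fun i => x (q ^ k * s + i)) := by
  induction k with
  | zero => simp
  | succ k ih =>
    rw [Function.iterate_succ_apply', ih, substWord_seg hζ hxfix]
    rw [pow_succ']
    simp only [mul_assoc]

lemma prim_block (hζ : IsConstLenSubst ζ q) (hxfix : substSeq ζ q x = x) (hprim : IsPrimitive ζ) :
    ∃ K, 1 ≤ K ∧ ∀ t b, ∃ r < q ^ K, x (q ^ K * t + r) = b := by
  obtain ⟨K, hK, h⟩ := hprim
  refine ⟨K, hK, fun t b => ?_⟩
  have := h (x t) b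
  rw [substWord_iter hζ hxfix] at this
  simpa using this

lemma unif_rec (hζ : IsConstLenSubst ζ q) (hxfix : substSeq ζ q x = x) (hprim : IsPrimitive ζ)
    (N : ℕ) : ∃ G, 1 ≤ G ∧ ∀ b, ∃ t, G * b ≤ t ∧ t + N ≤ G * (b + 1) ∧
      ∀ h < N, x (t + h) = x h := by
  obtain ⟨K, hK, hp⟩ := prim_block hζ hxfix hprim
  have hq := hζ.1
  have hN : N < q ^ N := Nat.lt_pow_self (by omega)
  have hpos : 0 < q ^ N := by positivity
  refine ⟨q ^ N * q ^ K, Nat.one_le_iff_ne_zero.2 (by positivity), fun b => ?_⟩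
  obtain ⟨r, hr, hb⟩ := hp b (x 0)
  refine ⟨q ^ N * (q ^ K * b + r), ?_, ?_, ?_⟩
  · rw [mul_assoc]; exact Nat.mul_le_mul_left _ (by omega)
  · calc _ ≤ q ^ N * (q ^ K * b + r) + q ^ N := by omega
      _ = q ^ N * (q ^ K * b + (r + 1)) := by ring
      _ ≤ q ^ N * (q ^ K * b + q ^ K) := Nat.mul_le_mul_left _ (by omega)
      _ = _ := by ring
  · intro h hh
    have := block_det hq hxfix N _ _ h (by omega) hb
    simpa using this

lemma aper (hζ : IsConstLenSubst ζ q) (hxfix : substSeq ζ q x = x) (hprim : IsPrimitive ζ)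
    (hap : IsAperiodic ζ) (p : ℕ) (hp : 1 ≤ p) (N : ℕ) : ∃ i, N ≤ i ∧ x (i + p) ≠ x i := by
  obtain ⟨y, hy, hyp⟩ := hap
  obtain ⟨i, hi⟩ := hyp p hp
  obtain ⟨a, k, -, hinf⟩ := hy (i + p + 1)
  obtain ⟨K, hK, hpb⟩ := prim_block hζ hxfix hprim
  obtain ⟨r, -, hr⟩ := hpb 0 a
  rw [← hr, substWord_iter hζ hxfix] at hinf
  obtain ⟨u, v, huv⟩ := hinf
  have key : ∀ h < i + p + 1, y h = x (q ^ k * (q ^ K * 0 + r) + (u.length + h)) := by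
    intro h hh
    have h1 := congrArg (fun l => l[u.length + h]?) huv
    have hlen := congrArg List.length huv
    simp only [List.length_append, List.length_ofFn, List.length_map, List.length_range] at hlen
    rw [List.append_assoc, List.getElem?_append_right (by omega),
      List.getElem?_append_left (by simp; omega)] at h1
    have h2 : u.length + h < q ^ k := by omega
    rw [add_tsub_cancel_left, List.getElem?_ofFn, dif_pos hh, List.getElem?_map,
      List.getElem?_range h2] at h1
    simpa using h1
  set c := q ^ k * (q ^ K * 0 + r) with hc
  obtain ⟨G, hG, hrec⟩ := unif_rec hζ hxfix hprim (c + (u.length + (i + p)) + 1)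
  obtain ⟨t, ht, -, hx⟩ := hrec N
  refine ⟨t + (c + (u.length + i)), ?_, ?_⟩
  · nlinarith
  · have e1 := hx (c + (u.length + i)) (by omega)
    have e2 := hx (c + (u.length + (i + p))) (by omega)
    have e3 : t + (c + (u.length + i)) + p = t + (c + (u.length + (i + p))) := by ring
    rw [e3, e1, e2, ← key _ (by omega), ← key _ (by omega)]
    exact hi

/-- existence of inner lines of arbitrarily large length -/
lemma exists_line (hA : ∀ p, 1 ≤ p → ∀ N, ∃ i, N ≤ i ∧ x (i + p) ≠ x i) (L : ℕ) (hL : 1 ≤ L) :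
    ∃ l, L ≤ l ∧ (Kset x l).Nonempty := by
  -- left special pair
  have hls : ∃ i j, i < j ∧ x i ≠ x j ∧ ∀ h < L, x (i + 1 + h) = x (j + 1 + h) := by
    by_contra hcon
    push Not at hcon
    have hstep : ∀ i j, i < j → (∀ h < L, x (i + 1 + h) = x (j + 1 + h)) → x i = x j := by
      intro i j hij hh
      by_contra hne
      obtain ⟨h, h1, h2⟩ := hcon i j hij hne
      exact h2 (hh h h1)
    have hback : ∀ m i j, i < j → (∀ h < L, x (i + m + h) = x (j + m + h)) →
        ∀ h < m, x (i + h) = x (j + h) := by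
      intro m
      induction m with
      | zero => intro i j _ _ h hh; omega
      | succ m ih =>
        intro i j hij hh
        have h0 : x (i + m) = x (j + m) := by
          apply hstep _ _ (by omega)
          intro h hlt
          have := hh h hlt
          simpa [add_assoc] using this
        intro h hlt
        rcases Nat.lt_succ_iff_lt_or_eq.1 hlt with h1 | h1
        · refine ih i j hij ?_ h h1
          intro h' hlt'
          rcases h' with _ | h'
          · simpa using h0
          · have := hh h' (by omega)
            rw [show i + m + (h' + 1) = i + (m + 1) + h' by ring,
              show j + m + (h' + 1) = j + (m + 1) + h' by ring]
            exact this
        · rw [h1]; exact h0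
    have hg : ∀ M, ∃ g, 1 ≤ g ∧ g ≤ 2 ^ L ∧ ∀ t < M, x (t + g) = x t := by
      intro M
      obtain ⟨a, b, hab, heq⟩ := Fintype.exists_ne_map_eq_of_card_lt
        (fun (i : Fin (2 ^ L + 1)) => fun h : Fin L => x (M + i + h)) (by simp)
      wlog hlt : a < b generalizing a b
      · exact this b a hab.symm heq.symm (lt_of_le_of_ne (not_lt.1 hlt) hab.symm)
      have hlt' : (a : ℕ) < b := hlt
      refine ⟨b - a, by omega, by have := b.2; omega, ?_⟩
      have := hback (M + a) 0 (b - a) (by omega) ?_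
      · intro t ht
        have := this t (by omega)
        rw [add_comm t]; simpa using this.symm
      · intro h hh
        have := congrFun heq ⟨h, hh⟩
        simp only at this
        rw [zero_add, this]; congr 1; omega
    choose g hg1 hg2 hg3 using hg
    obtain ⟨y, hy⟩ := Finite.exists_infinite_fiber
      (fun M : ℕ => (⟨g M, Nat.lt_succ_of_le (hg2 M)⟩ : Fin (2 ^ L + 1)))
    have hinf : (Set.Infinite ((fun M : ℕ => (⟨g M, Nat.lt_succ_of_le (hg2 M)⟩ : Fin (2 ^ L + 1))) ⁻¹' {y})) :=
      Set.infinite_coe_iff.1 hy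
    have hy1 : 1 ≤ (y : ℕ) := by
      obtain ⟨M, hM⟩ := hinf.nonempty
      have : (⟨g M, Nat.lt_succ_of_le (hg2 M)⟩ : Fin (2 ^ L + 1)) = y := hM
      rw [← this]; exact hg1 M
    obtain ⟨i, -, hi⟩ := hA y hy1 0
    obtain ⟨M, hM, hMi⟩ := hinf.exists_gt i
    have : (⟨g M, Nat.lt_succ_of_le (hg2 M)⟩ : Fin (2 ^ L + 1)) = y := hM
    apply hi
    rw [← this]
    exact hg3 M i hMi
  obtain ⟨i, j, hij, hne, heq⟩ := hls
  have hex : ∃ l, x (i + 1 + l) ≠ x (j + 1 + l) := by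
    obtain ⟨t, ht, htt⟩ := hA (j - i) (by omega) (i + 1)
    refine ⟨t - (i + 1), ?_⟩
    rw [show i + 1 + (t - (i + 1)) = t by omega, show j + 1 + (t - (i + 1)) = t + (j - i) by omega]
    exact htt.symm
  classical
  refine ⟨Nat.find hex, ?_, (i + 1, j + 1), ?_⟩
  · by_contra hlt
    exact Nat.find_spec hex (heq _ (not_le.1 hlt))
  · have hLl : L ≤ Nat.find hex := by
      by_contra hlt
      exact Nat.find_spec hex (heq _ (not_le.1 hlt))
    refine ⟨by simp, by simp, by omega, by simp; omega, ?_, ?_, Nat.find_spec hex⟩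
    · intro h hh
      have := Nat.find_min hex hh
      simpa using this
    · intro _ _; simpa using hne

end structural
end RQA
namespace RQA

section freq

lemma contraction_lim (e η : ℕ → ℝ) (B d : ℝ) (Q : ℕ) (hQ : 1 ≤ Q) (hB : ∀ n, |e n| ≤ B)
    (hd0 : 0 ≤ d) (hd : d < 1) (hη : Tendsto η atTop (𝓝 0))
    (h : ∀ n, |e n| ≤ d * |e (n / Q)| + η n) : Tendsto e atTop (𝓝 0) := by
  have key : ∀ k : ℕ, ∀ ε > 0, ∀ᶠ n in atTop, |e n| ≤ d ^ k * B + ε := by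
    intro k
    induction k with
    | zero => intro ε hε; filter_upwards with n; have := hB n; simp; linarith
    | succ k ih =>
      intro ε hε
      have h1 := ih (ε / 2) (by linarith)
      have h2 : Tendsto (fun n : ℕ => n / Q) atTop atTop := Nat.tendsto_div_const_atTop (by omega)
      have h3 := h2.eventually h1
      have h4 : ∀ᶠ n in atTop, η n < ε / 2 := hη.eventually (gt_mem_nhds (by linarith))
      filter_upwards [h3, h4] with n h3 h4
      have := h n
      have h5 := mul_le_mul_of_nonneg_left h3 hd0
      have h6 : d * (ε / 2) ≤ ε / 2 := by nlinarith
      rw [pow_succ']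
      nlinarith
  rw [Metric.tendsto_atTop]
  intro ε hε
  have h1 : Tendsto (fun k : ℕ => d ^ k * B) atTop (𝓝 0) := by
    simpa using (tendsto_pow_atTop_nhds_zero_of_lt_one hd0 hd).mul_const B
  obtain ⟨k, hk⟩ := (h1.eventually (gt_mem_nhds (show (0:ℝ) < ε / 2 by linarith))).exists
  obtain ⟨N, hN⟩ := eventually_atTop.1 (key k (ε / 4) (by linarith))
  refine ⟨N, fun n hn => ?_⟩
  have := hN n hn
  simp only [Real.dist_eq, sub_zero]
  linarith

lemma cesaro_conv (c : ℕ → ℝ) (hc : ∀ n r, |c (n + r) - c n| ≤ r)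
    (h : ∀ ε > 0, ∃ a : ℝ, ∃ Q : ℕ, 1 ≤ Q ∧ ∀ᶠ n : ℕ in atTop,
      |c (Q * n) - a * (Q * n)| ≤ ε * (Q * n)) :
    ∃ f : ℝ, Tendsto (fun n : ℕ => c n / n) atTop (𝓝 f) := by
  apply cauchySeq_tendsto_of_complete
  rw [Metric.cauchySeq_iff]
  intro ε hε
  obtain ⟨a, Q, hQ, hev⟩ := h (ε / 8) (by linarith)
  have h2 : Tendsto (fun n : ℕ => n / Q) atTop atTop := Nat.tendsto_div_const_atTop (by omega)
  have h4 : ∀ᶠ n : ℕ in atTop, (Q : ℝ) * (1 + |a|) / (ε / 8) < n :=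
    tendsto_natCast_atTop_atTop.eventually (eventually_gt_atTop _)
  obtain ⟨N, hN⟩ := eventually_atTop.1 ((h2.eventually hev).and (h4.and (eventually_gt_atTop 0)))
  have key : ∀ n ≥ N, |c n / n - a| ≤ ε / 4 := by
    intro n hn
    obtain ⟨h1, h2, h3⟩ := hN n hn
    have hnpos : (0 : ℝ) < n := by exact_mod_cast h3
    have hdm := Nat.div_add_mod n Q
    have hml : n % Q < Q := Nat.mod_lt _ (by omega)
    have hcc := hc (Q * (n / Q)) (n % Q)
    rw [hdm] at hcc
    have hdm' : (Q : ℝ) * ((n / Q : ℕ) : ℝ) + ((n % Q : ℕ) : ℝ) = n := by exact_mod_cast hdm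
    have hml' : ((n % Q : ℕ) : ℝ) ≤ Q := by exact_mod_cast hml.le
    have hm0 : (0 : ℝ) ≤ ((n % Q : ℕ) : ℝ) := by positivity
    set m : ℝ := ((n / Q : ℕ) : ℝ)
    set r : ℝ := ((n % Q : ℕ) : ℝ)
    rw [div_lt_iff₀ (by linarith)] at h2
    have h5 : |c n - a * n| ≤ ε / 4 * n := by
      have e1 : c n - a * n = (c n - c (Q * (n / Q))) + (c (Q * (n / Q)) - a * (Q * m)) - a * r := by
        rw [← hdm']; ring
      have e2 : |a * r| ≤ |a| * Q := by
        rw [abs_mul, abs_of_nonneg hm0]; exact mul_le_mul_of_nonneg_left hml' (abs_nonneg _)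
      have e3 : (Q : ℝ) * m ≤ n := by linarith
      have e4 : ε / 8 * (Q * m) ≤ ε / 8 * n := mul_le_mul_of_nonneg_left e3 (by linarith)
      rw [e1]
      refine (abs_sub _ _).trans ?_
      have := abs_add_le (c n - c (Q * (n / Q))) (c (Q * (n / Q)) - a * (Q * m))
      nlinarith
    rw [show c n / n - a = (c n - a * n) / n by field_simp, abs_div, abs_of_pos hnpos,
      div_le_iff₀ hnpos]
    exact h5
  refine ⟨N, fun m hm n hn => ?_⟩
  have := key m hm
  have := key n hn
  rw [Real.dist_eq]
  rw [show c m / m - c n / n = (c m / m - a) - (c n / n - a) by ring]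
  refine (abs_sub _ _).trans_lt ?_
  linarith

lemma count_congr_lt (P P' : ℕ → Prop) [DecidablePred P] [DecidablePred P'] (n : ℕ)
    (h : ∀ i < n, (P i ↔ P' i)) : Nat.count P n = Nat.count P' n := by
  induction n with
  | zero => simp
  | succ n ih =>
    rw [Nat.count_succ, Nat.count_succ, ih (fun i hi => h i (by omega))]
    simp [h n (by omega)]

lemma count_pos_of (P : ℕ → Prop) [DecidablePred P] {r n : ℕ} (hr : r < n) (h : P r) :
    0 < Nat.count P n := by
  rw [Nat.count_eq_card_filter_range, Finset.card_pos]
  exact ⟨r, by simp [hr, h]⟩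

lemma count_lt_of (P : ℕ → Prop) [DecidablePred P] {r n : ℕ} (hr : r < n) (h : ¬ P r) :
    Nat.count P n < n := by
  rw [Nat.count_eq_card_filter_range]
  conv_rhs => rw [← Finset.card_range n]
  apply Finset.card_lt_card
  rw [Finset.filter_ssubset]
  exact ⟨r, by simp [hr], h⟩

lemma count_lip (P : ℕ → Prop) [DecidablePred P] (n r : ℕ) :
    |((Nat.count P (n + r) : ℕ) : ℝ) - (Nat.count P n : ℕ)| ≤ r := by
  rw [Nat.count_add]
  push_cast
  rw [add_sub_cancel_left, abs_of_nonneg (by positivity)]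
  exact_mod_cast Nat.count_le _

variable {q : ℕ} {x : ℕ → Bool}

lemma count_blocks (P : ℕ → Prop) [DecidablePred P] (Q : ℕ) (E b0 b1 : ℝ)
    (h0 : ∀ t, x t = false → |(Nat.count (fun r => P (Q * t + r)) Q : ℝ) - b0| ≤ E)
    (h1 : ∀ t, x t = true → |(Nat.count (fun r => P (Q * t + r)) Q : ℝ) - b1| ≤ E) (n : ℕ) :
    |(Nat.count P (Q * n) : ℝ) - (b0 * Nat.count (fun i => x i = false) n +
      b1 * (n - Nat.count (fun i => x i = false) n))| ≤ E * n := by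
  induction n with
  | zero => simp
  | succ n ih =>
    rw [mul_add, mul_one, Nat.count_add, Nat.count_succ]
    push_cast
    cases hx : x n with
    | false =>
      have := h0 n hx
      simp only [if_true]
      rw [abs_le] at *
      constructor <;> linarith [this.1, this.2, ih.1, ih.2]
    | true =>
      have := h1 n hx
      simp only [Bool.true_eq_false, if_false]
      rw [abs_le] at *
      constructor <;> linarith [this.1, this.2, ih.1, ih.2]

lemma letter_freq (hdet : ∀ k s t r, r < q ^ k → x s = x t → x (q ^ k * s + r) = x (q ^ k * t + r))
    (hp : ∃ K, 1 ≤ K ∧ ∀ t b, ∃ r < q ^ K, x (q ^ K * t + r) = b) :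
    ∃ β : ℝ, Tendsto (fun n : ℕ => (Nat.count (fun i => x i = false) n : ℝ) / n) atTop (𝓝 β) := by
  obtain ⟨K, hK, hp⟩ := hp
  obtain ⟨s0, -, hs0⟩ := hp 0 false
  obtain ⟨s1, -, hs1⟩ := hp 0 true
  generalize q ^ K * 0 + s0 = s0 at hs0
  generalize q ^ K * 0 + s1 = s1 at hs1
  have hdet := hdet K
  set Q := q ^ K
  have hQ : 1 ≤ Q := by obtain ⟨r, hr, -⟩ := hp 0 true; omega
  set b : ℕ → ℕ := fun t => Nat.count (fun r => x (Q * t + r) = false) Q with hb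
  have hbeq : ∀ s t, x s = x t → b s = b t := by
    intro s t hst
    apply count_congr_lt
    intro i hi
    rw [hdet s t i hi hst]
  have hblt : ∀ t, b t < Q := by
    intro t
    obtain ⟨r, hr, hrt⟩ := hp t true
    exact count_lt_of _ hr (by simp [hrt])
  have hbpos : ∀ t, 0 < b t := by
    intro t
    obtain ⟨r, hr, hrt⟩ := hp t false
    exact count_pos_of _ hr hrt
  have hcb := count_blocks (x := x) (fun i => x i = false) Q 0 (b s0) (b s1)
    (fun t ht => by
      have : b t = b s0 := hbeq _ _ (ht.trans hs0.symm)
      rw [← this]; simp [hb])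
    (fun t ht => by
      have : b t = b s1 := hbeq _ _ (ht.trans hs1.symm)
      rw [← this]; simp [hb])
  set c : ℕ → ℕ := fun n => Nat.count (fun i => x i = false) n with hc
  have hcn : ∀ n, (c n : ℝ) ≤ n := fun n => by exact_mod_cast Nat.count_le _
  have hb0 := hblt s0
  have hb1 := hblt s1
  have hb0' := hbpos s0
  have hb1' := hbpos s1
  set α0 : ℝ := (b s0 : ℝ)
  set α1 : ℝ := (b s1 : ℝ)
  have a0 : α0 < Q := Nat.cast_lt.2 hb0
  have a1 : α1 < Q := Nat.cast_lt.2 hb1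
  have a0' : 0 < α0 := Nat.cast_pos.2 hb0'
  have a1' : 0 < α1 := Nat.cast_pos.2 hb1'
  have hQ0 : (0 : ℝ) < Q := by linarith
  set δ := α0 - α1 with hδ
  have hδQ : |δ| < Q := by rw [abs_lt]; constructor <;> linarith
  set β := α1 / (Q - δ) with hβ
  have hβ' : β * (Q - δ) = α1 := by
    rw [hβ]; field_simp [show (Q:ℝ) - δ ≠ 0 by have := (abs_lt.1 hδQ).2; linarith]
  refine ⟨β, ?_⟩
  set e : ℕ → ℝ := fun n => ((c n : ℝ) - β * n) / n with he
  have hcE : ∀ n, |(c n : ℝ) - β * n| ≤ |δ| * |(c (n / Q) : ℝ) - β * ((n / Q : ℕ) : ℝ)| + (Q + |β| * Q) := by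
    intro n
    have hdm := Nat.div_add_mod n Q
    have hml : n % Q < Q := Nat.mod_lt _ (by omega)
    have hdm' : (Q : ℝ) * ((n / Q : ℕ) : ℝ) + ((n % Q : ℕ) : ℝ) = n := by exact_mod_cast hdm
    have hml' : ((n % Q : ℕ) : ℝ) ≤ Q := by exact_mod_cast hml.le
    have hm0 : (0 : ℝ) ≤ ((n % Q : ℕ) : ℝ) := by positivity
    have hcc := count_lip (fun i => x i = false) (Q * (n / Q)) (n % Q)
    rw [hdm] at hcc
    have h2 := hcb (n / Q)
    simp only [zero_mul, abs_nonpos_iff] at h2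
    change |(c n : ℝ) - c (Q * (n / Q))| ≤ _ at hcc
    change (c (Q * (n / Q)) : ℝ) - (α0 * c (n / Q) + α1 * (((n / Q : ℕ) : ℝ) - c (n / Q))) = 0 at h2
    set m : ℝ := ((n / Q : ℕ) : ℝ)
    set r : ℝ := ((n % Q : ℕ) : ℝ)
    have e1 : (c n : ℝ) - β * n = δ * ((c (n / Q) : ℝ) - β * m) +
        (((c n : ℝ) - c (Q * (n / Q))) - β * r) := by
      rw [← hdm']
      have : (c (Q * (n / Q)) : ℝ) = α1 * m + δ * c (n / Q) := by rw [hδ]; linarith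
      rw [this, ← hβ']; ring
    rw [e1]
    refine (abs_add_le _ _).trans ?_
    rw [abs_mul]
    have e2 := abs_sub ((c n : ℝ) - c (Q * (n / Q))) (β * r)
    have e3 : |β * r| ≤ |β| * Q := by
      rw [abs_mul, abs_of_nonneg hm0]; exact mul_le_mul_of_nonneg_left hml' (abs_nonneg _)
    linarith
  have hlim : Tendsto e atTop (𝓝 0) := by
    apply contraction_lim e (fun n => (Q + |β| * Q) / n) (1 + |β|) (|δ| / Q) Q hQ
    · intro n
      rcases Nat.eq_zero_or_pos n with h | h
      · subst h; simp [he]; positivity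
      · have hn : (0 : ℝ) < n := by exact_mod_cast h
        simp only [he]
        rw [abs_div, abs_of_pos hn, div_le_iff₀ hn]
        refine (abs_sub _ _).trans ?_
        rw [abs_mul, abs_of_pos hn, abs_of_nonneg (by positivity)]
        linarith [hcn n]
    · positivity
    · rw [div_lt_one hQ0]; exact hδQ
    · exact tendsto_const_div_atTop_nhds_zero_nat _
    · intro n
      rcases Nat.eq_zero_or_pos n with h | h
      · subst h; simp [he]
      · have hn : (0 : ℝ) < n := by exact_mod_cast h
        have hh := hcE n
        simp only [he]
        rw [abs_div, abs_of_pos hn, div_le_iff₀ hn, add_mul, div_mul_cancel₀ _ hn.ne']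
        refine hh.trans ?_
        refine add_le_add ?_ le_rfl
        have hdm := Nat.mul_div_le n Q
        have hdm' : (Q : ℝ) * ((n / Q : ℕ) : ℝ) ≤ n := by exact_mod_cast hdm
        rcases Nat.eq_zero_or_pos (n / Q) with h0 | h0
        · rw [h0]; simp [hc]
        · have hm : (0 : ℝ) < ((n / Q : ℕ) : ℝ) := by exact_mod_cast h0
          rw [abs_div, abs_of_pos hm]
          set m : ℝ := ((n / Q : ℕ) : ℝ)
          have : |δ| / Q * (|(c (n / Q) : ℝ) - β * m| / m) * n =
            |δ| * |(c (n / Q) : ℝ) - β * m| * (n / (Q * m)) := by field_simp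
          rw [this]
          have h1 : 1 ≤ (n : ℝ) / (Q * m) := by rw [one_le_div (by positivity)]; exact hdm'
          exact le_mul_of_one_le_right (by positivity) h1
  have : Tendsto (fun n => e n + β) atTop (𝓝 β) := by simpa using hlim.add_const β
  refine this.congr' ?_
  filter_upwards [eventually_gt_atTop 0] with n hn
  have hn : (n : ℝ) ≠ 0 := by positivity
  simp only [he]
  field_simp
  ring

lemma pred_freq (hq : 2 ≤ q)
    (hdet : ∀ k s t r, r < q ^ k → x s = x t → x (q ^ k * s + r) = x (q ^ k * t + r))
    (hp : ∃ K, 1 ≤ K ∧ ∀ t b, ∃ r < q ^ K, x (q ^ K * t + r) = b)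
    (P : ℕ → Prop) [DecidablePred P] (m : ℕ)
    (hP : ∀ i j, (∀ h < m, x (i + h) = x (j + h)) → (P i ↔ P j)) :
    ∃ f : ℝ, Tendsto (fun n : ℕ => (Nat.count P n : ℝ) / n) atTop (𝓝 f) := by
  obtain ⟨β, hβ⟩ := letter_freq hdet hp
  obtain ⟨K, hK, hp⟩ := hp
  obtain ⟨s0, -, hs0⟩ := hp 0 false
  obtain ⟨s1, -, hs1⟩ := hp 0 true
  generalize q ^ K * 0 + s0 = s0 at hs0
  generalize q ^ K * 0 + s1 = s1 at hs1
  apply cesaro_conv (fun n => (Nat.count P n : ℝ)) (fun n r => count_lip P n r)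
  intro ε hε
  -- choose k
  have hkt : Tendsto (fun k : ℕ => q ^ k) atTop atTop := tendsto_pow_atTop_atTop_of_one_lt (by omega)
  have hkt' : Tendsto (fun k : ℕ => ((q ^ k : ℕ) : ℝ)) atTop atTop :=
    tendsto_natCast_atTop_atTop.comp hkt
  obtain ⟨k, hk1, hk2⟩ := ((hkt.eventually (eventually_ge_atTop (m + 1))).and
    (hkt'.eventually (eventually_ge_atTop ((m : ℝ) / (ε / 2))))).exists
  have hdet := hdet k
  set Q := q ^ k
  have hQ0 : (0 : ℝ) < Q := by have : 0 < Q := by omega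
                               exact_mod_cast this
  rw [div_le_iff₀ (by linarith)] at hk2
  set b : ℕ → ℕ := fun t => Nat.count (fun r => P (Q * t + r)) Q with hb
  have hbQ : ∀ t, (b t : ℝ) ≤ Q := fun t => by exact_mod_cast Nat.count_le _
  have hbeq : ∀ s t, x s = x t → |(b s : ℝ) - b t| ≤ m := by
    intro s t hst
    have e : ∀ t, b t = Nat.count (fun r => P (Q * t + r)) (Q - m) +
        Nat.count (fun r => P (Q * t + (Q - m + r))) m := by
      intro t
      simp only [hb]
      conv_lhs => rw [show Q = (Q - m) + m by omega]
      rw [Nat.count_add]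
      congr 1
      · rw [show Q - m + m = Q by omega]
      · rw [show Q - m + m = Q by omega]
    have e1 : Nat.count (fun r => P (Q * s + r)) (Q - m) = Nat.count (fun r => P (Q * t + r)) (Q - m) := by
      apply count_congr_lt
      intro i hi
      apply hP
      intro h hh
      rw [add_assoc, add_assoc]
      exact hdet s t (i + h) (by omega) hst
    rw [e s, e t, e1]
    have e2 : Nat.count (fun r => P (Q * s + (Q - m + r))) m ≤ m := Nat.count_le _
    have e3 : Nat.count (fun r => P (Q * t + (Q - m + r))) m ≤ m := Nat.count_le _
    have e2' : (Nat.count (fun r => P (Q * s + (Q - m + r))) m : ℝ) ≤ m := by exact_mod_cast e2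
    have e3' : (Nat.count (fun r => P (Q * t + (Q - m + r))) m : ℝ) ≤ m := by exact_mod_cast e3
    push_cast
    rw [abs_le]
    have p1 : (0:ℝ) ≤ (Nat.count (fun r => P (Q * s + (Q - m + r))) m : ℝ) := by positivity
    have p2 : (0:ℝ) ≤ (Nat.count (fun r => P (Q * t + (Q - m + r))) m : ℝ) := by positivity
    constructor <;> linarith
  have hcb := count_blocks (x := x) P Q m (b s0) (b s1)
    (fun t ht => hbeq _ _ (ht.trans hs0.symm)) (fun t ht => hbeq _ _ (ht.trans hs1.symm))
  refine ⟨((b s0 : ℝ) * β + b s1 * (1 - β)) / Q, Q, by omega, ?_⟩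
  have hev : ∀ᶠ n : ℕ in atTop, |(Nat.count (fun i => x i = false) n : ℝ) / n - β| < ε / 2 := by
    have := (Metric.tendsto_nhds.1 hβ) (ε / 2) (by linarith)
    simpa [Real.dist_eq] using this
  filter_upwards [hev, eventually_gt_atTop 0] with n hn hn0
  have hn' : (0 : ℝ) < n := by exact_mod_cast hn0
  have h1 := hcb n
  set c : ℝ := (Nat.count (fun i => x i = false) n : ℝ)
  have h2 : |c - β * n| ≤ ε / 2 * n := by
    have : c - β * n = (c / n - β) * n := by field_simp
    rw [this, abs_mul, abs_of_pos hn']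
    exact mul_le_mul_of_nonneg_right hn.le hn'.le
  have e1 : (Nat.count P (Q * n) : ℝ) - ((b s0 : ℝ) * β + b s1 * (1 - β)) / Q * (Q * n) =
      ((Nat.count P (Q * n) : ℝ) - ((b s0 : ℝ) * c + b s1 * (n - c))) +
      ((b s0 : ℝ) - b s1) * (c - β * n) := by
    field_simp
    ring
  rw [e1]
  refine (abs_add_le _ _).trans ?_
  rw [abs_mul]
  have h3 : |(b s0 : ℝ) - b s1| ≤ Q := by
    have := hbQ s0
    have := hbQ s1
    have p1 : (0:ℝ) ≤ b s0 := by positivity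
    have p2 : (0:ℝ) ≤ b s1 := by positivity
    rw [abs_le]; constructor <;> linarith
  have h4 : |(b s0 : ℝ) - b s1| * |c - β * n| ≤ Q * (ε / 2 * n) :=
    mul_le_mul h3 h2 (abs_nonneg _) hQ0.le
  have h5 : (m : ℝ) * n ≤ Q * (ε / 2) * n := mul_le_mul_of_nonneg_right hk2 hn'.le
  nlinarith

end freq
end RQA
namespace RQA

section dens

variable {q : ℕ} {x : ℕ → Bool}

/-- window of length `m` at `i` -/
def Win (x : ℕ → Bool) (m i : ℕ) : Fin m → Bool := fun h => x (i + h)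

/-- pairs of windows forming an inner line of length `l` -/
def WRel (l : ℕ) (p : (Fin (l + 2) → Bool) × (Fin (l + 2) → Bool)) : Prop :=
  p.1 0 ≠ p.2 0 ∧ (∀ h : Fin (l + 2), 1 ≤ (h : ℕ) → (h : ℕ) ≤ l → p.1 h = p.2 h) ∧
    p.1 (Fin.last (l + 1)) ≠ p.2 (Fin.last (l + 1))

lemma mem_Kset_iff (l : ℕ) (hl : 1 ≤ l) (i j : ℕ) :
    (i + 1, j + 1) ∈ Kset x l ↔ WRel l (Win x (l + 2) i, Win x (l + 2) j) := by
  have e : ∀ i h, i + 1 + h = i + (h + 1) := fun i h => by omega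
  simp only [Kset, Set.mem_ofPred_eq, IsInfLine, WRel, Win, Fin.val_zero, Fin.val_last, e]
  constructor
  · rintro ⟨-, -, -, -, h1, h2, h3⟩
    refine ⟨by simpa using h2, ?_, by simpa using h3⟩
    intro h hh1 hh2
    have := h1 (h - 1) (by omega)
    rwa [show (h : ℕ) - 1 + 1 = h by omega] at this
  · rintro ⟨h1, h2, h3⟩
    refine ⟨by omega, by omega, hl, ?_, ?_, by simpa using h1, h3⟩
    · intro hij
      have : i = j := by omega
      exact h1 (by rw [this])
    · intro h hh
      exact h2 ⟨h + 1, by omega⟩ (by simp) (by simp; omega)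

open Classical in
lemma ncard_Kset (l : ℕ) (hl : 1 ≤ l) (n : ℕ) :
    Set.ncard (Kset x l ∩ {p : ℕ × ℕ | p.1 < n + 1 ∧ p.2 < n + 1}) =
      ∑ p ∈ Finset.univ.filter (WRel l), Nat.count (fun i => Win x (l + 2) i = p.1) n *
        Nat.count (fun i => Win x (l + 2) i = p.2) n := by
  set T : Finset (ℕ × ℕ) := (Finset.range n ×ˢ Finset.range n).filter
    (fun p => WRel l (Win x (l + 2) p.1, Win x (l + 2) p.2)) with hT
  have h1 : Kset x l ∩ {p : ℕ × ℕ | p.1 < n + 1 ∧ p.2 < n + 1} =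
      (fun p : ℕ × ℕ => (p.1 + 1, p.2 + 1)) '' (T : Set (ℕ × ℕ)) := by
    ext ⟨i, j⟩
    simp only [Set.mem_inter_iff, Set.mem_image, hT, Finset.coe_filter, Finset.mem_product,
      Finset.mem_range, Set.mem_ofPred_eq, Prod.exists, Prod.mk.injEq]
    constructor
    · rintro ⟨hK, h1, h2⟩
      have hi : 1 ≤ i := hK.1
      have hj : 1 ≤ j := hK.2.1
      refine ⟨i - 1, j - 1, ⟨⟨by omega, by omega⟩, ?_⟩, by omega, by omega⟩
      rw [← mem_Kset_iff l hl]
      rwa [Nat.sub_add_cancel hi, Nat.sub_add_cancel hj]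
    · rintro ⟨a, b, ⟨⟨h1, h2⟩, h3⟩, rfl, rfl⟩
      exact ⟨(mem_Kset_iff l hl _ _).2 h3, by omega, by omega⟩
  rw [h1, Set.ncard_image_of_injective _ (by rintro ⟨a, b⟩ ⟨c, d⟩ h; simpa using h),
    Set.ncard_coe_finset]
  rw [Finset.card_eq_sum_card_fiberwise (f := fun p : ℕ × ℕ => (Win x (l + 2) p.1, Win x (l + 2) p.2))
    (t := Finset.univ.filter (WRel l))]
  · apply Finset.sum_congr rfl
    rintro ⟨u, v⟩ huv
    simp only [Finset.mem_filter, Finset.mem_univ, true_and] at huv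
    rw [Nat.count_eq_card_filter_range, Nat.count_eq_card_filter_range, ← Finset.card_product]
    congr 1
    ext ⟨i, j⟩
    simp only [hT, Finset.mem_filter, Finset.mem_product, Finset.mem_range, Prod.mk.injEq]
    constructor
    · rintro ⟨⟨⟨h1, h2⟩, -⟩, h3, h4⟩
      exact ⟨⟨h1, h3⟩, h2, h4⟩
    · rintro ⟨⟨h1, h3⟩, h2, h4⟩
      refine ⟨⟨⟨h1, h2⟩, ?_⟩, h3, h4⟩
      rw [h3, h4]; exact huv
  · intro p hp
    simp only [hT, Finset.coe_filter, Set.mem_ofPred_eq] at hp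
    simpa using hp.2

lemma freq_pos (P : ℕ → Prop) [DecidablePred P] (m : ℕ)
    (hP : ∀ i j, (∀ h < m, x (i + h) = x (j + h)) → (P i ↔ P j))
    (hrec : ∀ N, ∃ G, 1 ≤ G ∧ ∀ b, ∃ t, G * b ≤ t ∧ t + N ≤ G * (b + 1) ∧ ∀ h < N, x (t + h) = x h)
    (f : ℝ) (hf : Tendsto (fun n : ℕ => (Nat.count P n : ℝ) / n) atTop (𝓝 f))
    (i : ℕ) (hi : P i) : 0 < f := by
  obtain ⟨G, hG, hrec⟩ := hrec (i + m + 1)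
  have hc : ∀ n, n ≤ Nat.count P (G * n) := by
    intro n
    induction n with
    | zero => simp
    | succ n ih =>
      obtain ⟨t, h1, h2, h3⟩ := hrec n
      have hPt : P (t + i) := by
        rw [hP (t + i) i]
        · exact hi
        · intro h hh; rw [add_assoc]; exact h3 _ (by omega)
      have e1 : Nat.count P (G * n) ≤ Nat.count P (t + i) := Nat.count_monotone _ (by omega)
      have e2 : Nat.count P (t + i) < Nat.count P (G * (n + 1)) :=
        Nat.count_strict_mono hPt (by omega)
      omega
  have hG0 : (0 : ℝ) < G := by exact_mod_cast hG
  have hG' : Tendsto (fun n : ℕ => G * n) atTop atTop :=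
    tendsto_id.const_mul_atTop' (by omega)
  have h2 := hf.comp hG'
  have : (1 : ℝ) / G ≤ f := by
    refine ge_of_tendsto h2 ?_
    filter_upwards [eventually_gt_atTop 0] with n hn
    have hn : (0 : ℝ) < n := by exact_mod_cast hn
    have := hc n
    have : (n : ℝ) ≤ Nat.count P (G * n) := by exact_mod_cast this
    simp only [Function.comp]
    push_cast
    rw [div_le_div_iff₀ hG0 (by positivity)]
    nlinarith
  exact lt_of_lt_of_le (by positivity) this

lemma dens_exists (hq : 2 ≤ q)
    (hdet : ∀ k s t r, r < q ^ k → x s = x t → x (q ^ k * s + r) = x (q ^ k * t + r))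
    (hp : ∃ K, 1 ≤ K ∧ ∀ t b, ∃ r < q ^ K, x (q ^ K * t + r) = b)
    (hrec : ∀ N, ∃ G, 1 ≤ G ∧ ∀ b, ∃ t, G * b ≤ t ∧ t + N ≤ G * (b + 1) ∧ ∀ h < N, x (t + h) = x h)
    (l : ℕ) : ∃ d : ℝ, 1 ≤ l → HasDens (Kset x l) d ∧ ((Kset x l).Nonempty → 0 < d) := by
  classical
  by_cases hl : 1 ≤ l
  swap
  · exact ⟨0, fun h => absurd h hl⟩
  have hPw : ∀ (u : Fin (l + 2) → Bool) i j, (∀ h < l + 2, x (i + h) = x (j + h)) →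
      (Win x (l + 2) i = u ↔ Win x (l + 2) j = u) := by
    intro u i j h
    have : Win x (l + 2) i = Win x (l + 2) j := by
      ext a; exact h a a.2
    rw [this]
  have hfr := fun u : Fin (l + 2) → Bool =>
    pred_freq hq hdet hp (fun i => Win x (l + 2) i = u) (l + 2) (hPw u)
  choose f hf using hfr
  have hf0 : ∀ u, 0 ≤ f u := fun u => ge_of_tendsto' (hf u) (fun n => by positivity)
  refine ⟨∑ p ∈ Finset.univ.filter (WRel l), f p.1 * f p.2, fun _ => ⟨?_, ?_⟩⟩
  · unfold HasDens
    rw [← tendsto_add_atTop_iff_nat 1]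
    have hf' : ∀ u, Tendsto (fun n : ℕ => (Nat.count (fun i => Win x (l + 2) i = u) n : ℝ) / (n + 1))
        atTop (𝓝 (f u)) := by
      intro u
      have h1 := (hf u).mul (tendsto_natCast_div_add_atTop (1 : ℝ))
      rw [mul_one] at h1
      refine h1.congr' ?_
      filter_upwards [eventually_gt_atTop 0] with n hn
      have hn : (0 : ℝ) < n := by exact_mod_cast hn
      field_simp
    have hs := tendsto_finsetSum (Finset.univ.filter (WRel l))
      (fun p _ => (hf' p.1).mul (hf' p.2))
    refine hs.congr ?_
    intro n
    unfold densCount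
    rw [ncard_Kset l hl n]
    push_cast
    rw [Finset.sum_div]
    apply Finset.sum_congr rfl
    intro p _
    rw [div_mul_div_comm, sq]
  · rintro ⟨⟨i, j⟩, hK⟩
    have hi : 1 ≤ i := hK.1
    have hj : 1 ≤ j := hK.2.1
    have hK' : (i - 1 + 1, j - 1 + 1) ∈ Kset x l := by
      rwa [Nat.sub_add_cancel hi, Nat.sub_add_cancel hj]
    rw [mem_Kset_iff l hl] at hK'
    apply Finset.sum_pos'
    · intro p _; exact mul_nonneg (hf0 _) (hf0 _)
    · refine ⟨(Win x (l + 2) (i - 1), Win x (l + 2) (j - 1)), by simpa using hK', ?_⟩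
      apply mul_pos
      · exact freq_pos _ (l + 2) (hPw _) hrec _ (hf _) (i - 1) rfl
      · exact freq_pos _ (l + 2) (hPw _) hrec _ (hf _) (j - 1) rfl

end dens
end RQA
namespace RQA

section plot

variable {x : ℕ → Bool}

lemma shift_iter (x : ℕ → Bool) (i h : ℕ) : (shift^[i] x) h = x (i + h) := by
  induction i generalizing h with
  | zero => simp
  | succ i ih =>
    rw [Function.iterate_succ_apply']
    simp only [shift]
    rw [ih]; congr 1; omega

lemma RPone_iff (x : ℕ → Bool) (i j : ℕ) : RPone seqDist shift x (1/2 : ℝ) i j ↔ x i = x j := by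
  unfold RPone seqDist
  have hi : x i = (shift^[i] x) 0 := by rw [shift_iter]; simp
  have hj : x j = (shift^[j] x) 0 := by rw [shift_iter]; simp
  rw [hi, hj]
  generalize shift^[i] x = y
  generalize shift^[j] x = z
  by_cases h : y = z
  · simp [h]
  · simp only [h, if_false]
    have hne : {i : ℕ | y i ≠ z i}.Nonempty := by
      by_contra hc
      rw [Set.not_nonempty_iff_eq_empty] at hc
      apply h; ext a
      by_contra h2
      have : a ∈ {i : ℕ | y i ≠ z i} := h2
      rw [hc] at this; exact this
    constructor
    · intro hle
      by_contra h0
      have : sInf {i : ℕ | y i ≠ z i} = 0 := Nat.sInf_eq_zero.2 (Or.inl h0)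
      rw [this] at hle
      norm_num at hle
    · intro h0
      have hmem := Nat.sInf_mem hne
      have h1 : 1 ≤ sInf {i : ℕ | y i ≠ z i} := by
        by_contra hc
        have e : sInf {i : ℕ | y i ≠ z i} = 0 := by omega
        rw [e] at hmem
        exact hmem h0
      rw [show (1/2 : ℝ) = (2:ℝ) ^ (-1 : ℤ) by norm_num]
      apply zpow_le_zpow_right₀ (by norm_num)
      omega

lemma isLine_iff (x : ℕ → Bool) (n i j l : ℕ) : IsLine seqDist shift x n (1/2 : ℝ) i j l ↔
    1 ≤ l ∧ i + l ≤ n ∧ j + l ≤ n ∧ i ≠ j ∧ (∀ h, h < l → x (i + h) = x (j + h)) ∧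
    (0 < i → 0 < j → x (i - 1) ≠ x (j - 1)) ∧ (max i j + l < n → x (i + l) ≠ x (j + l)) := by
  simp only [IsLine, RPone_iff, ne_eq]

/-- the finite set of line starts -/
lemma lines_finite (x : ℕ → Bool) (n l : ℕ) :
    {p : ℕ × ℕ | IsLine seqDist shift x n (1/2 : ℝ) p.1 p.2 l}.Finite := by
  apply Set.Finite.subset (Finset.finite_toSet (Finset.range n ×ˢ Finset.range n))
  rintro ⟨i, j⟩ h
  have h : IsLine seqDist shift x n (1/2 : ℝ) i j l := h
  rw [isLine_iff] at h
  simp; omega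

lemma Nlines_zero (x : ℕ → Bool) (n l : ℕ) (h : n < l) : Nlines seqDist shift x n (1/2 : ℝ) l = 0 := by
  unfold Nlines
  rw [Set.ncard_eq_zero (lines_finite x n l)]
  ext ⟨i, j⟩
  simp only [Set.mem_ofPred_eq, isLine_iff, Set.mem_empty_iff_false, iff_false]
  omega

lemma sum_lines_le (x : ℕ → Bool) (n : ℕ) (s : Finset ℕ) :
    ∑ l ∈ s, l * Nlines seqDist shift x n (1/2 : ℝ) l ≤ n * n - n := by
  classical
  have e : ∀ l, l * Nlines seqDist shift x n (1/2 : ℝ) l =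
      ((lines_finite x n l).toFinset ×ˢ Finset.range l).card := by
    intro l
    rw [Finset.card_product, Finset.card_range, mul_comm]
    congr 1
    unfold Nlines
    rw [Set.ncard_eq_toFinset_card _ (lines_finite x n l)]
  simp only [e]
  rw [← Finset.card_sigma]
  have : n * n - n = (Finset.range n).offDiag.card := by
    rw [Finset.offDiag_card, Finset.card_range]
  rw [this]
  apply Finset.card_le_card_of_injOn (fun z => (z.2.1.1 + z.2.2, z.2.1.2 + z.2.2))
  · rintro ⟨l, ⟨i, j⟩, h⟩ hz
    simp only [Finset.coe_sigma, Set.mem_sigma_iff, Finset.mem_coe, Finset.mem_product,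
      Set.Finite.mem_toFinset, Set.mem_ofPred_eq, Finset.mem_range, isLine_iff] at hz
    simp only [Finset.mem_coe, Finset.mem_offDiag, Finset.mem_range]
    omega
  · rintro ⟨l, ⟨i, j⟩, h⟩ hz ⟨l', ⟨i', j'⟩, h'⟩ hz' heq
    simp only [Finset.coe_sigma, Set.mem_sigma_iff, Finset.mem_coe, Finset.mem_product,
      Set.Finite.mem_toFinset, Set.mem_ofPred_eq, Finset.mem_range, isLine_iff] at hz hz'
    simp only [Prod.mk.injEq] at heq
    obtain ⟨-, ⟨hl, hi, hj, hij, hrec, hst, hen⟩, hh⟩ := hz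
    obtain ⟨-, ⟨hl', hi', hj', hij', hrec', hst', hen'⟩, hh'⟩ := hz'
    obtain ⟨q1, q2⟩ := heq
    have hhh : h = h' := by
      rcases lt_trichotomy h h' with hlt | hE | hlt
      · exfalso
        apply hst (by omega) (by omega)
        have := hrec' (h' - h - 1) (by omega)
        rwa [show i' + (h' - h - 1) = i - 1 by omega, show j' + (h' - h - 1) = j - 1 by omega] at this
      · exact hE
      · exfalso
        apply hst' (by omega) (by omega)
        have := hrec (h - h' - 1) (by omega)
        rwa [show i + (h - h' - 1) = i' - 1 by omega, show j + (h - h' - 1) = j' - 1 by omega] at this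
    subst hhh
    have hii : i = i' := by omega
    have hjj : j = j' := by omega
    subst hii hjj
    have hll : l = l' := by
      rcases lt_trichotomy l l' with hlt | hE | hlt
      · exfalso; exact hen (by omega) (hrec' l hlt)
      · exact hE
      · exfalso; exact hen' (by omega) (hrec l' hlt)
    subst hll
    rfl

lemma Pline_nonneg (x : ℕ → Bool) (n l : ℕ) : 0 ≤ Pline seqDist shift x n (1/2 : ℝ) l := by
  unfold Pline
  apply div_nonneg (by positivity)
  rcases Nat.eq_zero_or_pos n with h | h
  · subst h; simp
  · have : (1 : ℝ) ≤ n := by exact_mod_cast h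
    nlinarith

lemma sum_Pline_le (x : ℕ → Bool) (n : ℕ) (s : Finset ℕ) :
    ∑ l ∈ s, (l : ℝ) * Pline seqDist shift x n (1/2 : ℝ) l ≤ 1 := by
  have h := sum_lines_le x n s
  have hnn : n ≤ n * n := Nat.le_mul_self n
  have h' : ((∑ l ∈ s, l * Nlines seqDist shift x n (1/2 : ℝ) l : ℕ) : ℝ) ≤ (n : ℝ) ^ 2 - n := by
    have := (Nat.cast_le (α := ℝ)).2 h
    rw [Nat.cast_sub hnn] at this
    push_cast at this ⊢
    rw [sq]; exact this
  unfold Pline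
  simp only [mul_div_assoc']
  rw [← Finset.sum_div]
  push_cast at h'
  apply div_le_one_of_le₀ h'
  exact le_trans (Finset.sum_nonneg fun i _ => by positivity) h'

lemma Nlines_close (x : ℕ → Bool) (l : ℕ) (hl : 1 ≤ l) (n : ℕ) :
    |(Nlines seqDist shift x n (1/2 : ℝ) l : ℝ) -
      (Set.ncard (Kset x l ∩ {p : ℕ × ℕ | p.1 < n ∧ p.2 < n}) : ℝ)| ≤ 2 * (l + 1) * n := by
  classical
  set B := Kset x l ∩ {p : ℕ × ℕ | p.1 < n ∧ p.2 < n} with hB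
  set A := {p : ℕ × ℕ | IsLine seqDist shift x n (1/2 : ℝ) p.1 p.2 l} with hA
  set D : Finset ℕ := insert 0 (Finset.Ico (n - l) n) with hD
  set E : Finset (ℕ × ℕ) := D ×ˢ Finset.range n ∪ Finset.range n ×ˢ D with hE
  have hDc : D.card ≤ l + 1 := by
    refine (Finset.card_insert_le _ _).trans ?_
    rw [Nat.card_Ico]; omega
  have hEc : E.card ≤ 2 * (l + 1) * n := by
    refine (Finset.card_union_le _ _).trans ?_
    rw [Finset.card_product, Finset.card_product, Finset.card_range]
    nlinarith
  have hAf : A.Finite := lines_finite x n l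
  have hBf : B.Finite := by
    apply Set.Finite.subset (Finset.finite_toSet (Finset.range n ×ˢ Finset.range n))
    rintro ⟨i, j⟩ h
    have h : i < n ∧ j < n := h.2
    simpa using h
  have hmemE : ∀ i j, (i, j) ∈ E ↔ i < n ∧ j < n ∧ (i = 0 ∨ j = 0 ∨ n ≤ i + l ∨ n ≤ j + l) := by
    intro i j
    simp only [hE, hD, Finset.mem_union, Finset.mem_product, Finset.mem_insert, Finset.mem_Ico,
      Finset.mem_range]
    clear hEc hDc
    clear_value A B
    constructor
    · rintro (⟨h | h, h'⟩ | ⟨h', h | h⟩) <;> omega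
    · rintro ⟨h1, h2, h | h | h | h⟩ <;> omega
  have h1 : A ⊆ B ∪ E := by
    rintro ⟨i, j⟩ h
    have h : IsLine seqDist shift x n (1/2 : ℝ) i j l := h
    rw [isLine_iff] at h
    obtain ⟨hl, hi, hj, hij, hrec, hst, hen⟩ := h
    by_cases hc : i = 0 ∨ j = 0 ∨ n ≤ i + l ∨ n ≤ j + l
    · right
      rw [Finset.mem_coe, hmemE]
      omega
    · left
      refine ⟨⟨show 1 ≤ i by omega, show 1 ≤ j by omega, hl, hij, hrec, hst, hen (by omega)⟩,
        show i < n by omega, show j < n by omega⟩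
  have h2 : B ⊆ A ∪ E := by
    rintro ⟨i, j⟩ ⟨⟨hi1, hj1, hl, hij, hrec, hst, hen⟩, hi, hj⟩
    dsimp only at *
    by_cases hc : i = 0 ∨ j = 0 ∨ n ≤ i + l ∨ n ≤ j + l
    · right
      rw [Finset.mem_coe, hmemE]
      omega
    · left
      change IsLine seqDist shift x n (1/2 : ℝ) i j l
      rw [isLine_iff]
      exact ⟨hl, by omega, by omega, hij, hrec, hst, fun _ => hen⟩
  have c1 : A.ncard ≤ B.ncard + 2 * (l + 1) * n := by
    refine (Set.ncard_le_ncard h1 (hBf.union E.finite_toSet)).trans ?_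
    refine (Set.ncard_union_le _ _).trans ?_
    rw [Set.ncard_coe_finset]; omega
  have c2 : B.ncard ≤ A.ncard + 2 * (l + 1) * n := by
    refine (Set.ncard_le_ncard h2 (hAf.union E.finite_toSet)).trans ?_
    refine (Set.ncard_union_le _ _).trans ?_
    rw [Set.ncard_coe_finset]; omega
  have c1' : (A.ncard : ℝ) ≤ B.ncard + 2 * (l + 1) * n := by exact_mod_cast c1
  have c2' : (B.ncard : ℝ) ≤ A.ncard + 2 * (l + 1) * n := by exact_mod_cast c2
  change |(A.ncard : ℝ) - B.ncard| ≤ _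
  rw [abs_le]; constructor <;> linarith

lemma Pline_tendsto (x : ℕ → Bool) (l : ℕ) (hl : 1 ≤ l) (d : ℝ) (hd : HasDens (Kset x l) d) :
    Tendsto (fun n : ℕ => Pline seqDist shift x n (1/2 : ℝ) l) atTop (𝓝 d) := by
  have h1 : Tendsto (fun n : ℕ => (Nlines seqDist shift x n (1/2 : ℝ) l : ℝ) / (n : ℝ) ^ 2 -
      densCount (Kset x l) n) atTop (𝓝 0) := by
    apply squeeze_zero_norm' _ (tendsto_const_div_atTop_nhds_zero_nat (2 * ((l : ℝ) + 1)))
    filter_upwards [eventually_gt_atTop 0] with n hn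
    have hn : (0 : ℝ) < n := by exact_mod_cast hn
    unfold densCount
    rw [← sub_div, Real.norm_eq_abs, abs_div, abs_of_pos (show (0 : ℝ) < (n : ℝ) ^ 2 by positivity),
      div_le_div_iff₀ (by positivity) hn]
    have := Nlines_close x l hl n
    have := mul_le_mul_of_nonneg_right this hn.le
    linarith [this, show 2 * ((l : ℝ) + 1) * n * n = 2 * (l + 1) * (n : ℝ) ^ 2 by ring]
  have h2 := h1.add hd
  have h3 : Tendsto (fun n : ℕ => (1 - 1 / (n : ℝ))⁻¹) atTop (𝓝 1) := by
    have : Tendsto (fun n : ℕ => 1 - 1 / (n : ℝ)) atTop (𝓝 (1 - 0)) :=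
      tendsto_const_nhds.sub (tendsto_const_div_atTop_nhds_zero_nat 1)
    simpa using this.inv₀ (by norm_num)
  have h4 := h2.mul h3
  rw [zero_add, mul_one] at h4
  refine h4.congr' ?_
  filter_upwards [eventually_gt_atTop 1] with n hn
  have hn : (1 : ℝ) < n := by exact_mod_cast hn
  have hn1 : (n : ℝ) - 1 ≠ 0 := by linarith
  unfold Pline
  rw [sub_add_cancel, show (n : ℝ) ^ 2 - n = n ^ 2 * (1 - 1 / n) by field_simp, ← div_div]
  rfl

end plot

section tails

lemma tail_lemma (a : ℕ → ℕ → ℝ) (A : ℕ → ℝ) (h0 : ∀ n k, 0 ≤ a n k)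
    (hs : ∀ n, Summable (a n))
    (hlim : ∀ k, Tendsto (fun n => a n k) atTop (𝓝 (A k)))
    (ht : ∀ ε > 0, ∃ K : ℕ, ∀ n, ∀ s : Finset ℕ, (∀ k ∈ s, K ≤ k) → ∑ k ∈ s, a n k ≤ ε) :
    Summable A ∧ Tendsto (fun n => ∑' k, a n k) atTop (𝓝 (∑' k, A k)) := by
  have hA0 : ∀ k, 0 ≤ A k := fun k => ge_of_tendsto' (hlim k) (fun n => h0 n k)
  have htA : ∀ ε > 0, ∃ K : ℕ, (∀ s : Finset ℕ, (∀ k ∈ s, K ≤ k) → ∑ k ∈ s, A k ≤ ε) ∧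
      ∀ n, ∀ s : Finset ℕ, (∀ k ∈ s, K ≤ k) → ∑ k ∈ s, a n k ≤ ε := by
    intro ε hε
    obtain ⟨K, hK⟩ := ht ε hε
    refine ⟨K, fun s hs => ?_, hK⟩
    exact le_of_tendsto' (tendsto_finsetSum s fun k _ => hlim k) (fun n => hK n s hs)
  have hsA : Summable A := by
    obtain ⟨K, hK, -⟩ := htA 1 one_pos
    apply (summable_nat_add_iff K).1
    apply summable_of_sum_le (c := 1) (fun k => hA0 _)
    intro u
    have := hK (u.map (addRightEmbedding K)) (by
      intro k hk
      simp only [Finset.mem_map, addRightEmbedding_apply] at hk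
      obtain ⟨b, -, rfl⟩ := hk; omega)
    simpa using this
  refine ⟨hsA, ?_⟩
  rw [Metric.tendsto_nhds]
  intro ε hε
  obtain ⟨K, hK1, hK2⟩ := htA (ε / 4) (by linarith)
  have tl : ∀ f : ℕ → ℝ, (∀ k, 0 ≤ f k) → Summable f →
      (∀ s : Finset ℕ, (∀ k ∈ s, K ≤ k) → ∑ k ∈ s, f k ≤ ε / 4) →
      0 ≤ ∑' k, f k - ∑ k ∈ Finset.range K, f k ∧ ∑' k, f k - ∑ k ∈ Finset.range K, f k ≤ ε / 4 := by
    intro f hf hsf hb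
    rw [← hsf.sum_add_tsum_nat_add K, add_sub_cancel_left]
    refine ⟨tsum_nonneg fun k => hf _, ?_⟩
    apply ((summable_nat_add_iff K).2 hsf).tsum_le_of_sum_le
    intro u
    have := hb (u.map (addRightEmbedding K)) (by
      intro k hk
      simp only [Finset.mem_map, addRightEmbedding_apply] at hk
      obtain ⟨b, -, rfl⟩ := hk; omega)
    simpa using this
  have hfin := Metric.tendsto_nhds.1 (tendsto_finsetSum (Finset.range K) fun k _ => hlim k) (ε / 4)
    (by linarith)
  filter_upwards [hfin] with n hn
  obtain ⟨p1, p2⟩ := tl A hA0 hsA hK1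
  obtain ⟨p3, p4⟩ := tl (a n) (h0 n) (hs n) (hK2 n)
  rw [Real.dist_eq, abs_lt] at *
  constructor <;> linarith [hn.1, hn.2]

lemma negMulLog_le (p : ℝ) (hp : 0 ≤ p) (l : ℕ) (hl : 1 ≤ l) :
    Real.negMulLog p ≤ 2 * Real.log l * p + 1 / (l : ℝ) ^ 2 := by
  have hl0 : (0 : ℝ) < l := by exact_mod_cast hl
  rcases hp.eq_or_lt with h | h
  · rw [← h]; simp
  · have h1 := Real.log_le_sub_one_of_pos (show 0 < 1 / (p * (l : ℝ) ^ 2) by positivity)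
    rw [Real.log_div one_ne_zero (by positivity), Real.log_one, Real.log_mul h.ne' (by positivity),
      Real.log_pow] at h1
    push_cast at h1
    have h2 := mul_le_mul_of_nonneg_left h1 hp
    have h3 : p * (1 / (p * (l : ℝ) ^ 2) - 1) = 1 / (l : ℝ) ^ 2 - p := by field_simp
    unfold Real.negMulLog
    nlinarith

lemma entropy_pos (d : ℕ → ℝ) (hd : ∀ k, 0 ≤ d k) (hs : Summable d)
    (hs2 : Summable fun k => d k * Real.log (d k)) (a b : ℕ) (hab : a ≠ b) (ha : 0 < d a)
    (hb : 0 < d b) :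
    0 < ∑' k, d k ∧ 0 < Real.log (∑' k, d k) - (∑' k, d k)⁻¹ * ∑' k, d k * Real.log (d k) := by
  have hD : 0 < ∑' k, d k := hs.tsum_pos hd a ha
  refine ⟨hD, ?_⟩
  set D := ∑' k, d k with hDdef
  have hle : ∀ k, d k ≤ D := fun k => hs.le_tsum k (fun j _ => hd j)
  have hlt : d a < D := by
    have := hs.sum_le_tsum {a, b} (fun j _ => hd j)
    rw [Finset.sum_pair hab] at this
    linarith
  have hs3 : Summable fun k => d k * (Real.log D - Real.log (d k)) := by
    simp only [mul_sub]
    exact (hs.mul_right _).sub hs2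
  have hpos : 0 < ∑' k, d k * (Real.log D - Real.log (d k)) := by
    apply hs3.tsum_pos _ a
    · exact mul_pos ha (sub_pos.2 (Real.log_lt_log ha hlt))
    · intro k
      rcases (hd k).eq_or_lt with h | h
      · rw [← h]; simp
      · exact mul_nonneg h.le (sub_nonneg.2 (Real.log_le_log h (hle k)))
  have heq : ∑' k, d k * (Real.log D - Real.log (d k)) =
      D * Real.log D - ∑' k, d k * Real.log (d k) := by
    simp only [mul_sub]
    rw [(hs.mul_right _).tsum_sub hs2, tsum_mul_right]
  rw [heq] at hpos
  have : Real.log D - D⁻¹ * ∑' k, d k * Real.log (d k) =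
      D⁻¹ * (D * Real.log D - ∑' k, d k * Real.log (d k)) := by field_simp
  rw [this]
  positivity

end tails
end RQA
open RQA

/-- the asymptotic entropy of line lengths exists and
ENT_ℓ(x,∞,ε₀) = log(Σ_{l≥ℓ} dens(K_l)) − (Σ_{l≥ℓ} dens(K_l))⁻¹·Σ_{l≥ℓ} dens(K_l)·log dens(K_l) > 0. -/
theorem ENT_eq_densK
    (ζ : Bool → List Bool) (q : ℕ) (hζ : IsConstLenSubst ζ q)
    (hprim : IsPrimitive ζ) (hap : IsAperiodic ζ)
    (hζ0 : (ζ false).head? = some false)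
    (x : ℕ → Bool) (hx0 : x 0 = false) (hxfix : substSeq ζ q x = x)
    (ℓ : ℕ) (hℓ : 1 ≤ ℓ) :
    ∃ dK : ℕ → ℝ,
      (∀ l : ℕ, 1 ≤ l → HasDens (Kset x l) (dK l)) ∧
      Summable (fun k : ℕ => dK (ℓ + k)) ∧
      Summable (fun k : ℕ => dK (ℓ + k) * Real.log (dK (ℓ + k))) ∧
      0 < Real.log (∑' k : ℕ, dK (ℓ + k)) -
          (∑' k : ℕ, dK (ℓ + k))⁻¹ * ∑' k : ℕ, dK (ℓ + k) * Real.log (dK (ℓ + k)) ∧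
      Tendsto (fun n : ℕ => ENTln seqDist shift x n (1/2 : ℝ) ℓ) atTop
        (𝓝 (Real.log (∑' k : ℕ, dK (ℓ + k)) -
          (∑' k : ℕ, dK (ℓ + k))⁻¹ * ∑' k : ℕ, dK (ℓ + k) * Real.log (dK (ℓ + k)))) := by
  have hq := hζ.1
  have hdet := block_det hq hxfix
  have hp := prim_block hζ hxfix hprim
  have hrec := unif_rec hζ hxfix hprim
  have hA := aper hζ hxfix hprim hap
  choose dK hdK using dens_exists hq hdet hp hrec
  have hPlim : ∀ k, Tendsto (fun n : ℕ => Pline seqDist shift x n (1/2 : ℝ) (ℓ + k)) atTop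
      (𝓝 (dK (ℓ + k))) := fun k =>
    Pline_tendsto x (ℓ + k) (by omega) _ (hdK (ℓ + k) (by omega)).1
  set a : ℕ → ℕ → ℝ := fun n k => Pline seqDist shift x n (1/2 : ℝ) (ℓ + k) with ha
  have ha0 : ∀ n k, 0 ≤ a n k := fun n k => Pline_nonneg x n _
  have hweight : ∀ n, ∀ s : Finset ℕ, ∑ k ∈ s, ((ℓ + k : ℕ) : ℝ) * a n k ≤ 1 := by
    intro n s
    have := sum_Pline_le x n (s.map (addLeftEmbedding ℓ))
    simpa [ha] using this
  have ha1 : ∀ n k, a n k ≤ 1 := by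
    intro n k
    have := hweight n {k}
    rw [Finset.sum_singleton] at this
    have h1 : (1 : ℝ) ≤ ((ℓ + k : ℕ) : ℝ) := by exact_mod_cast (show 1 ≤ ℓ + k by omega)
    nlinarith [ha0 n k]
  have hazero : ∀ n k, k ∉ Finset.range (n + 1) → a n k = 0 := by
    intro n k hk
    simp only [Finset.mem_range] at hk
    simp only [ha, Pline]
    rw [Nlines_zero x n (ℓ + k) (by omega)]
    simp
  -- the two limits
  obtain ⟨hS1, hT1⟩ := tail_lemma a (fun k => dK (ℓ + k)) ha0
    (fun n => summable_of_ne_finset_zero (s := Finset.range (n + 1)) (hazero n)) hPlim (by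
      intro ε hε
      obtain ⟨K, hK⟩ := exists_nat_gt (1 / ε)
      refine ⟨K, fun n s hs => ?_⟩
      have h1 : ∑ k ∈ s, a n k ≤ ∑ k ∈ s, ε * (((ℓ + k : ℕ) : ℝ) * a n k) := by
        apply Finset.sum_le_sum
        intro k hk
        have h2 : (K : ℝ) ≤ ((ℓ + k : ℕ) : ℝ) := by
          exact_mod_cast (show K ≤ ℓ + k by have := hs k hk; omega)
        have h3 : 1 ≤ ε * ((ℓ + k : ℕ) : ℝ) := by
          rw [div_lt_iff₀ hε] at hK
          nlinarith
        rw [← mul_assoc]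
        exact le_mul_of_one_le_left (ha0 n k) h3
      rw [← Finset.mul_sum] at h1
      nlinarith [hweight n s])
  obtain ⟨hS2, hT2⟩ := tail_lemma (fun n k => Real.negMulLog (a n k))
    (fun k => Real.negMulLog (dK (ℓ + k)))
    (fun n k => Real.negMulLog_nonneg (ha0 n k) (ha1 n k))
    (fun n => summable_of_ne_finset_zero (s := Finset.range (n + 1)) (fun k hk => by
      rw [hazero n k hk]; simp))
    (fun k => (Real.continuous_negMulLog.tendsto _).comp (hPlim k)) (by
      intro ε hε
      have hsum : Summable (fun k : ℕ => 1 / ((k : ℝ)) ^ 2) :=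
        Real.summable_one_div_nat_pow.2 (by norm_num)
      have hsum' : Summable (fun k : ℕ => 1 / (((ℓ + k : ℕ) : ℝ)) ^ 2) := by
        have := (summable_nat_add_iff ℓ).2 hsum
        simpa [add_comm] using this
      have hlog : ∀ᶠ k : ℕ in atTop, 2 * Real.log ((ℓ + k : ℕ) : ℝ) ≤ ε / 2 * ((ℓ + k : ℕ) : ℝ) := by
        have h1 := Real.isLittleO_log_id_atTop.bound (show (0:ℝ) < ε / 4 by linarith)
        have h2 : Tendsto (fun k : ℕ => ((ℓ + k : ℕ) : ℝ)) atTop atTop :=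
          tendsto_natCast_atTop_atTop.comp (tendsto_atTop_mono (fun k => Nat.le_add_left k ℓ) tendsto_id)
        filter_upwards [h2.eventually h1] with k hk
        simp only [id, Real.norm_eq_abs] at hk
        have := le_abs_self (Real.log ((ℓ + k : ℕ) : ℝ))
        rw [abs_of_nonneg (show (0:ℝ) ≤ ((ℓ + k : ℕ) : ℝ) by positivity)] at hk
        linarith
      obtain ⟨K1, hK1⟩ := eventually_atTop.1 hlog
      obtain ⟨s0, hs0⟩ := summable_iff_vanishing_norm.1 hsum' (ε / 2) (by linarith)
      refine ⟨max K1 (s0.sup id + 1), fun n s hs => ?_⟩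
      have hdisj : Disjoint s s0 := by
        rw [Finset.disjoint_left]
        intro k hk hk0
        have h1 := hs k hk
        have h2 : k ≤ s0.sup id := Finset.le_sup (f := id) hk0
        have h3 := le_max_right K1 (s0.sup id + 1)
        omega
      have h1 := (le_abs_self _).trans (hs0 s hdisj).le
      have h2 : ∑ k ∈ s, Real.negMulLog (a n k) ≤
          ∑ k ∈ s, (ε / 2 * (((ℓ + k : ℕ) : ℝ) * a n k) + 1 / (((ℓ + k : ℕ) : ℝ)) ^ 2) := by
        apply Finset.sum_le_sum
        intro k hk
        refine (negMulLog_le (a n k) (ha0 n k) (ℓ + k) (by omega)).trans ?_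
        have h3 := hK1 k ((le_max_left _ _).trans (hs k hk))
        have h4 := mul_le_mul_of_nonneg_right h3 (ha0 n k)
        linarith
      rw [Finset.sum_add_distrib, ← Finset.mul_sum] at h2
      nlinarith [hweight n s])
  have hneg : (fun k => dK (ℓ + k) * Real.log (dK (ℓ + k))) =
      fun k => - Real.negMulLog (dK (ℓ + k)) := by
    ext k; simp [Real.negMulLog]
  have hS2' : Summable (fun k => dK (ℓ + k) * Real.log (dK (ℓ + k))) := by
    rw [hneg]; exact hS2.neg
  obtain ⟨l1, hl1, hne1⟩ := exists_line hA ℓ hℓ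
  obtain ⟨l2, hl2, hne2⟩ := exists_line hA (l1 + 1) (by omega)
  have hp1 := (hdK l1 (by omega)).2 hne1
  have hp2 := (hdK l2 (by omega)).2 hne2
  obtain ⟨hD, hpos⟩ := entropy_pos (fun k => dK (ℓ + k))
    (fun k => ge_of_tendsto' (hPlim k) (fun n => ha0 n k)) hS1 hS2' (l1 - ℓ) (l2 - ℓ) (by omega)
    (by simpa [Nat.add_sub_cancel' hl1] using hp1)
    (by simpa [Nat.add_sub_cancel' (show ℓ ≤ l2 by omega)] using hp2)
  refine ⟨dK, fun l hl => (hdK l hl).1, hS1, hS2', hpos, ?_⟩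
  have hT2' : Tendsto (fun n => ∑' k, a n k * Real.log (a n k)) atTop
      (𝓝 (∑' k, dK (ℓ + k) * Real.log (dK (ℓ + k)))) := by
    rw [hneg, tsum_neg]
    refine hT2.neg.congr fun n => ?_
    rw [← tsum_neg]
    congr 1; ext k; simp [Real.negMulLog]
  exact (hT1.log hD.ne').sub ((hT1.inv₀ hD.ne').mul hT2')
end
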